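/- arXiv:0808.0739 — 3 statements merged into one kernel-verified Lean document; each statement's English description precedes it below -/
import Mathlib

section
/- For every n ≥ 1 and every 1 ≤ ℓ ≤ n, the simplicial complex |ℓ-SAT-n| of satisfiable ℓ-conjunctive formulas in n variables is homotopy equivalent to Θ(Cube(n, n−ℓ)). -/
/-- A hypergraph on vertex type `V` is given by its set `H` of hyperedges
(subsets of `V`).  The theta complex `Θ(𝓗)` has as simplices the nonempty
finite subsets of `V` that are disjoint from at least one hyperedge. -/
def thetaComplex {V : Type*} (H : Set (Set V)) : Set (Finset V) :=
  {σ : Finset V | σ.Nonempty ∧ ∃ h ∈ H, ∀ v ∈ σ, v ∉ h}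

/-- The geometric realization of a complex `K` of finite subsets of `V`:
convex combinations of vertices supported on a simplex of `K`, topologized as a
subspace of `V → ℝ`. -/
def geomReal {V : Type*} (K : Set (Finset V)) : Set (V → ℝ) :=
  {f | (∀ v, 0 ≤ f v) ∧ ∃ σ ∈ K, (∀ v, f v ≠ 0 → v ∈ σ) ∧ ∑ v ∈ σ, f v = 1}

/-- The hypergraph `Cube(n,k)`: vertices are the vertices `{0,1}^n` of the
`n`-cube, and hyperedges are the vertex sets of the `k`-dimensional faces,
i.e. the subsets obtained by fixing `n - k` of the coordinates. -/
def cubeEdges (n k : ℕ) : Set (Set (Fin n → Bool)) :=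
  {e | ∃ (s : Finset (Fin n)) (g : Fin n → Bool),
    s.card = n - k ∧ e = {f | ∀ i ∈ s, f i = g i}}

/-- A clause in `ℓ`-conjunctive normal form over the variables `x_1, …, x_n`:
a set of `ℓ` literals (pairs of a variable and a polarity) involving `ℓ`
distinct variables. -/
abbrev Clause (n ℓ : ℕ) : Type :=
  {c : Finset (Fin n × Bool) // c.card = ℓ ∧ (c.image Prod.fst).card = ℓ}

/-- A formula in `ℓ`-conjunctive normal form: a conjunction of (distinct)
clauses, with at least one clause. -/
abbrev CNF (n ℓ : ℕ) : Type := {φ : Finset (Clause n ℓ) // φ.Nonempty}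

/-- The truth assignment `τ` satisfies the formula `φ` iff in every clause some
literal evaluates to true. -/
def Satisfies {n ℓ : ℕ} (τ : Fin n → Bool) (φ : CNF n ℓ) : Prop :=
  ∀ c ∈ φ.1, ∃ x ∈ c.1, τ x.1 = x.2

/-- The satisfiable formulas in `ℓ`-conjunctive normal form in `n` variables. -/
abbrev SatCNF (n ℓ : ℕ) : Type := {φ : CNF n ℓ // ∃ τ, Satisfies τ φ}

instance {n ℓ : ℕ} : DecidableEq (SatCNF n ℓ) := Subtype.instDecidableEq

/-- Logical implication of formulas. -/
def Implies {n ℓ : ℕ} (φ ψ : CNF n ℓ) : Prop :=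
  ∀ τ : Fin n → Bool, Satisfies τ φ → Satisfies τ ψ

/-- The simplicial complex `|ℓ-SAT-n|`: vertices are the satisfiable
`ℓ`-conjunctive formulas, and a finite set of such formulas spans a simplex iff
its elements can be arranged in a chain of implications `φ₀ ⇒ φ₁ ⇒ ⋯ ⇒ φ_k`. -/
def satComplex (n ℓ : ℕ) : Set (Finset (SatCNF n ℓ)) :=
  {σ | σ.Nonempty ∧ ∃ l : List (SatCNF n ℓ), l.Nodup ∧ l.toFinset = σ ∧
    l.Chain' (fun φ ψ => Implies φ.1 ψ.1)}

section GeometricRealization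

variable {V : Type*} [Fintype V]

theorem mem_geomReal_of_sum_eq_one {K : Set (Finset V)} {f : V → ℝ} (h₀ : ∀ v, 0 ≤ f v)
    (h₁ : ∑ v, f v = 1) {σ : Finset V} (hσ : σ ∈ K) (hf : ∀ v, f v ≠ 0 → v ∈ σ) :
    f ∈ geomReal K := by
  refine ⟨h₀, σ, hσ, hf, ?_⟩
  rw [← h₁]
  exact Finset.sum_subset (Finset.subset_univ σ) fun v _ hv => by_contra fun h => hv (hf v h)

theorem sum_eq_one_of_mem_geomReal {K : Set (Finset V)} {f : V → ℝ} (hf : f ∈ geomReal K) :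
    ∑ v, f v = 1 := by
  obtain ⟨-, σ, -, hσ, h₁⟩ := hf
  rw [← h₁]
  exact (Finset.sum_subset (Finset.subset_univ σ)
    fun v _ hv => by_contra fun h => hv (hσ v h)).symm

/-- Two maps into a geometric realization are homotopic through straight lines as soon as they are
contiguous: each point is mapped into a common simplex. -/
theorem homotopic_of_common_simplex {X : Type*} [TopologicalSpace X] {K : Set (Finset V)}
    (f g : C(X, geomReal K))
    (h : ∀ x, ∃ σ ∈ K, (∀ v, (f x).1 v ≠ 0 → v ∈ σ) ∧ ∀ v, (g x).1 v ≠ 0 → v ∈ σ) :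
    f.Homotopic g := by
  refine ⟨{
    toFun := fun p => ⟨fun v => (1 - (p.1 : ℝ)) * (f p.2).1 v + (p.1 : ℝ) * (g p.2).1 v, ?_⟩
    continuous_toFun := ?_
    map_zero_left := fun x => ?_
    map_one_left := fun x => ?_ }⟩
  · obtain ⟨σ, hσ, hf, hg⟩ := h p.2
    refine mem_geomReal_of_sum_eq_one (fun v => ?_) ?_ hσ fun v hv => ?_
    · exact add_nonneg (mul_nonneg (sub_nonneg.2 p.1.2.2) ((f p.2).2.1 v))
        (mul_nonneg p.1.2.1 ((g p.2).2.1 v))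
    · rw [Finset.sum_add_distrib, ← Finset.mul_sum, ← Finset.mul_sum,
        sum_eq_one_of_mem_geomReal (f p.2).2, sum_eq_one_of_mem_geomReal (g p.2).2]
      ring
    · by_contra hvσ
      refine hv ?_
      have h₁ : (f p.2).1 v = 0 := by_contra fun h => hvσ (hf v h)
      have h₂ : (g p.2).1 v = 0 := by_contra fun h => hvσ (hg v h)
      simp [h₁, h₂]
  · refine Continuous.subtype_mk (continuous_pi fun v => ?_) _
    have hf : Continuous fun p : unitInterval × X => (f p.2).1 v :=
      (continuous_apply v).comp
        (continuous_subtype_val.comp (f.continuous.comp continuous_snd))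
    have hg : Continuous fun p : unitInterval × X => (g p.2).1 v :=
      (continuous_apply v).comp
        (continuous_subtype_val.comp (g.continuous.comp continuous_snd))
    have hp : Continuous fun p : unitInterval × X => (p.1 : ℝ) :=
      continuous_subtype_val.comp continuous_fst
    exact ((continuous_const.sub hp).mul hf).add (hp.mul hg)
  · ext v
    simp
  · ext v
    simp

/-- A weight that is positive exactly when `A` is a superlevel set of `y` at a positive level. -/
noncomputable def levelWeight [DecidableEq V] (y : V → ℝ) (A : Finset V) : ℝ :=
  (∏ a ∈ A, max (y a) 0) * ∏ a ∈ A, ∏ b ∈ Aᶜ, max (y a - y b) 0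

section LevelWeight

variable [DecidableEq V]

theorem levelWeight_nonneg (y : V → ℝ) (A : Finset V) : 0 ≤ levelWeight y A :=
  mul_nonneg (Finset.prod_nonneg fun _ _ => le_max_right _ _)
    (Finset.prod_nonneg fun _ _ => Finset.prod_nonneg fun _ _ => le_max_right _ _)

theorem levelWeight_ne_zero_iff {y : V → ℝ} {A : Finset V} :
    levelWeight y A ≠ 0 ↔ (∀ a ∈ A, 0 < y a) ∧ ∀ a ∈ A, ∀ b ∉ A, y b < y a := by
  have key : ∀ r : ℝ, max r 0 ≠ 0 ↔ 0 < r := fun r => by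
    rw [ne_eq, max_eq_right_iff, not_le]
  simp only [levelWeight, mul_ne_zero_iff, Finset.prod_ne_zero_iff, key, Finset.mem_compl,
    sub_pos]

theorem continuous_levelWeight (A : Finset V) :
    Continuous fun y : V → ℝ => levelWeight y A := by
  unfold levelWeight
  fun_prop

theorem subset_or_subset_of_levelWeight_ne_zero {y : V → ℝ} {A B : Finset V}
    (hA : levelWeight y A ≠ 0) (hB : levelWeight y B ≠ 0) : A ⊆ B ∨ B ⊆ A := by
  rw [levelWeight_ne_zero_iff] at hA hB
  by_contra! h
  obtain ⟨a, haA, haB⟩ := Finset.not_subset.1 h.1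
  obtain ⟨b, hbB, hbA⟩ := Finset.not_subset.1 h.2
  exact lt_asymm (hA.2 a haA b hbA) (hB.2 b hbB a haB)

theorem exists_levelWeight_ne_zero {K : Set (Finset V)}
    (hK : ∀ σ ∈ K, ∀ τ ⊆ σ, τ.Nonempty → τ ∈ K) {y : V → ℝ} (hy : y ∈ geomReal K) :
    ∃ A ∈ K, levelWeight y A ≠ 0 := by
  obtain ⟨h₀, σ, hσ, hyσ, h₁⟩ := hy
  refine ⟨σ.filter fun v => y v ≠ 0, hK σ hσ _ (Finset.filter_subset _ _) ?_, ?_⟩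
  · obtain ⟨v, hv, hv0⟩ := Finset.exists_ne_zero_of_sum_ne_zero (h₁ ▸ one_ne_zero)
    exact ⟨v, Finset.mem_filter.2 ⟨hv, hv0⟩⟩
  · have hpos : ∀ a ∈ σ.filter fun v => y v ≠ 0, 0 < y a := fun a ha =>
      lt_of_le_of_ne (h₀ a) (Finset.mem_filter.1 ha).2.symm
    refine levelWeight_ne_zero_iff.2 ⟨hpos, fun a ha b hb => ?_⟩
    have hb0 : y b = 0 := by_contra fun h => hb (Finset.mem_filter.2 ⟨hyσ b h, h⟩)
    exact hb0 ▸ hpos a ha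

end LevelWeight

end GeometricRealization

section ChainComplex

variable {V W : Type*}

/-- The complex of nonempty finite sets of labels `w` whose associated sets `S w` form a chain. -/
def chainComplex (S : W → Finset V) : Set (Finset W) :=
  {σ | σ.Nonempty ∧ ∀ a ∈ σ, ∀ b ∈ σ, S a ⊆ S b ∨ S b ⊆ S a}

section Barycenter

variable [DecidableEq V]

theorem barycenterMap_term_nonneg (S : W → Finset V) {x : W → ℝ} (hx : ∀ w, 0 ≤ x w) (v : V)
    (w : W) : 0 ≤ x w * if v ∈ S w then ((S w).card : ℝ)⁻¹ else 0 := by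
  refine mul_nonneg (hx w) ?_
  split_ifs <;> positivity

theorem barycenterMap_term_mono (S : W → Finset V) {x : W → ℝ} (hx : ∀ w, 0 ≤ x w) {a b : V}
    {w : W} (h : x w ≠ 0 → a ∈ S w → b ∈ S w) :
    (x w * if a ∈ S w then ((S w).card : ℝ)⁻¹ else 0) ≤
      x w * if b ∈ S w then ((S w).card : ℝ)⁻¹ else 0 := by
  by_cases hw : x w = 0
  · simp [hw]
  by_cases ha : a ∈ S w
  · rw [if_pos ha, if_pos (h hw ha)]
  · rw [if_neg ha, mul_zero]
    exact barycenterMap_term_nonneg S hx b w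

variable [Fintype W]

/-- The affine map sending the vertex `w` to the barycenter of `S w`. -/
noncomputable def barycenterMap (S : W → Finset V) (x : W → ℝ) (v : V) : ℝ :=
  ∑ w, x w * if v ∈ S w then ((S w).card : ℝ)⁻¹ else 0

theorem continuous_barycenterMap (S : W → Finset V) : Continuous (barycenterMap S) := by
  unfold barycenterMap
  fun_prop

theorem exists_of_barycenterMap_ne_zero {S : W → Finset V} {x : W → ℝ} {v : V}
    (h : barycenterMap S x v ≠ 0) : ∃ w, x w ≠ 0 ∧ v ∈ S w := by
  obtain ⟨w, -, hw⟩ := Finset.exists_ne_zero_of_sum_ne_zero h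
  refine ⟨w, left_ne_zero_of_mul hw, by_contra fun hv => hw ?_⟩
  rw [if_neg hv, mul_zero]

variable [Fintype V]

theorem sum_barycenterMap {S : W → Finset V} (hS : ∀ w, (S w).Nonempty) (x : W → ℝ) :
    ∑ v, barycenterMap S x v = ∑ w, x w := by
  unfold barycenterMap
  rw [Finset.sum_comm]
  refine Finset.sum_congr rfl fun w _ => ?_
  rw [← Finset.mul_sum, Finset.sum_ite_mem, Finset.univ_inter, Finset.sum_const, nsmul_eq_mul,
    mul_inv_cancel₀ (Nat.cast_ne_zero.2 (hS w).card_pos.ne'), mul_one]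

theorem barycenterMap_mem_geomReal {K : Set (Finset V)} (hK₀ : ∀ σ ∈ K, σ.Nonempty)
    {S : W → Finset V} (hS : ∀ w, S w ∈ K) {x : W → ℝ} (hx : x ∈ geomReal (chainComplex S)) :
    barycenterMap S x ∈ geomReal K := by
  have hsum := sum_eq_one_of_mem_geomReal hx
  obtain ⟨h₀, σ, ⟨hσ, hchain⟩, hxσ, -⟩ := hx
  obtain ⟨t, htσ, ht⟩ := Finset.exists_max_image σ (fun w => (S w).card) hσ
  refine mem_geomReal_of_sum_eq_one
    (fun v => Finset.sum_nonneg fun w _ => barycenterMap_term_nonneg S h₀ v w)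
    ((sum_barycenterMap (fun w => hK₀ _ (hS w)) x).trans hsum) (hS t) fun v hv => ?_
  obtain ⟨w, hw, hvw⟩ := exists_of_barycenterMap_ne_zero hv
  rcases hchain w (hxσ w hw) t htσ with h | h
  · exact h hvw
  · exact Finset.eq_of_subset_of_card_le h (ht w (hxσ w hw)) ▸ hvw

/-- The superlevel sets of a combination of barycenters of a chain are members of the chain. -/
theorem exists_eq_of_levelWeight_barycenterMap_ne_zero {S : W → Finset V}
    (hS : ∀ w, (S w).Nonempty) {x : W → ℝ} (hx : x ∈ geomReal (chainComplex S)) {A : Finset V}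
    (hA₀ : A.Nonempty) (hA : levelWeight (barycenterMap S x) A ≠ 0) :
    ∃ w, x w ≠ 0 ∧ A = S w := by
  classical
  obtain ⟨h₀, σ, ⟨-, hchain⟩, hxσ, -⟩ := hx
  obtain ⟨hpos, hlt⟩ := levelWeight_ne_zero_iff.1 hA
  obtain ⟨a, haA, hmin⟩ := Finset.exists_min_image A (barycenterMap S x) hA₀
  obtain ⟨w₁, hw₁, haw₁⟩ := exists_of_barycenterMap_ne_zero (hpos a haA).ne'
  obtain ⟨w, hw, hwmin⟩ := Finset.exists_min_image
    (Finset.univ.filter fun w => x w ≠ 0 ∧ a ∈ S w) (fun w => (S w).card)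
    ⟨w₁, Finset.mem_filter.2 ⟨Finset.mem_univ _, hw₁, haw₁⟩⟩
  simp only [Finset.mem_filter, Finset.mem_univ, true_and] at hw hwmin
  refine ⟨w, hw.1, Finset.Subset.antisymm (fun b hb => ?_) fun b hb => ?_⟩
  · by_contra hbw
    refine (hmin b hb).not_gt (Finset.sum_lt_sum (fun u _ => ?_) ⟨w, Finset.mem_univ _, ?_⟩)
    · refine barycenterMap_term_mono S h₀ fun hu hbu => ?_
      rcases hchain w (hxσ w hw.1) u (hxσ u hu) with h | h
      · exact h hw.2
      · exact absurd (h hbu) hbw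
    · rw [if_neg hbw, if_pos hw.2, mul_zero]
      exact mul_pos (lt_of_le_of_ne (h₀ w) hw.1.symm)
        (inv_pos.2 (Nat.cast_pos.2 (hS w).card_pos))
  · by_contra hbA
    refine (hlt a haA b hbA).not_ge (Finset.sum_le_sum fun u _ => ?_)
    refine barycenterMap_term_mono S h₀ fun hu hau => ?_
    rcases hchain w (hxσ w hw.1) u (hxσ u hu) with h | h
    · exact h hb
    · exact (Finset.eq_of_subset_of_card_le h (hwmin u ⟨hu, hau⟩)).symm ▸ hb

end Barycenter

section Level

variable [Fintype V] [DecidableEq V] {K : Set (Finset V)} [Fintype K] [DecidableEq W]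

/-- The map sending `y` to the normalized combination of the vertices `Φ A`, where `A` runs through
the superlevel sets of `y`. -/
noncomputable def levelMap (Φ : K → W) (y : V → ℝ) (w : W) : ℝ :=
  (∑ A : K, if Φ A = w then levelWeight y A else 0) / ∑ A : K, levelWeight y A

theorem exists_of_levelMap_ne_zero {Φ : K → W} {y : V → ℝ} {w : W} (h : levelMap Φ y w ≠ 0) :
    ∃ A, Φ A = w ∧ levelWeight y A ≠ 0 := by
  obtain ⟨A, -, hA⟩ := Finset.exists_ne_zero_of_sum_ne_zero (div_ne_zero_iff.1 h).1
  exact ⟨A, by_contra fun h => hA (if_neg h), fun h => hA (by rw [h, ite_self])⟩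

theorem sum_levelWeight_pos (hK : ∀ σ ∈ K, ∀ τ ⊆ σ, τ.Nonempty → τ ∈ K) {y : V → ℝ}
    (hy : y ∈ geomReal K) : 0 < ∑ A : K, levelWeight y A := by
  obtain ⟨A, hA, h⟩ := exists_levelWeight_ne_zero hK hy
  exact Finset.sum_pos' (fun B _ => levelWeight_nonneg y B)
    ⟨⟨A, hA⟩, Finset.mem_univ _, lt_of_le_of_ne (levelWeight_nonneg y A) h.symm⟩

theorem levelMap_mem_geomReal [Fintype W] (hK : ∀ σ ∈ K, ∀ τ ⊆ σ, τ.Nonempty → τ ∈ K)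
    {S : W → Finset V} {Φ : K → W} (hΦ : ∀ A B : K, A.1 ⊆ B.1 → S (Φ A) ⊆ S (Φ B)) {y : V → ℝ}
    (hy : y ∈ geomReal K) : levelMap Φ y ∈ geomReal (chainComplex S) := by
  have hpos := sum_levelWeight_pos hK hy
  refine mem_geomReal_of_sum_eq_one
    (σ := (Finset.univ.filter fun A : K => levelWeight y A ≠ 0).image Φ)
    (fun w => div_nonneg (Finset.sum_nonneg fun A _ => ?_) hpos.le) ?_ ⟨?_, ?_⟩ fun w hw => ?_
  · split_ifs
    · exact levelWeight_nonneg y A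
    · exact le_rfl
  · unfold levelMap
    rw [← Finset.sum_div, Finset.sum_comm]
    simp only [Finset.sum_ite_eq, Finset.mem_univ, if_true]
    exact div_self hpos.ne'
  · obtain ⟨A, hA, h⟩ := exists_levelWeight_ne_zero hK hy
    exact ⟨Φ ⟨A, hA⟩, Finset.mem_image_of_mem _ (Finset.mem_filter.2 ⟨Finset.mem_univ _, h⟩)⟩
  · simp only [Finset.mem_image, Finset.mem_filter, Finset.mem_univ, true_and]
    rintro _ ⟨A, hA, rfl⟩ _ ⟨B, hB, rfl⟩
    exact (subset_or_subset_of_levelWeight_ne_zero hA hB).imp (hΦ A B) (hΦ B A)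
  · obtain ⟨A, rfl, hA⟩ := exists_of_levelMap_ne_zero hw
    exact Finset.mem_image_of_mem _ (Finset.mem_filter.2 ⟨Finset.mem_univ _, hA⟩)

theorem continuous_levelMap (hK : ∀ σ ∈ K, ∀ τ ⊆ σ, τ.Nonempty → τ ∈ K) (Φ : K → W) :
    Continuous fun y : geomReal K => levelMap Φ y.1 := by
  have hw : ∀ A : K, Continuous fun y : geomReal K => levelWeight y.1 A := fun A =>
    (continuous_levelWeight A.1).comp continuous_subtype_val
  refine continuous_pi fun w => Continuous.div (continuous_finsetSum _ fun A _ => ?_)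
    (continuous_finsetSum _ fun A _ => hw A) fun y => (sum_levelWeight_pos hK y.2).ne'
  split_ifs
  · exact hw A
  · exact continuous_const

end Level

/-- If `A ↦ S (Φ A)` is a closure operator on the simplices of `K` whose closed sets are the
sets `S w`, then the complex of chains of closed sets is homotopy equivalent to `K`. -/
theorem nonempty_homotopyEquiv_chainComplex [Fintype V] [Fintype W] {K : Set (Finset V)}
    (hK₀ : ∀ σ ∈ K, σ.Nonempty) (hK : ∀ σ ∈ K, ∀ τ ⊆ σ, τ.Nonempty → τ ∈ K)
    {S : W → Finset V} (hS : ∀ w, S w ∈ K)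
    {Φ : K → W} (hΦ : ∀ A B : K, A.1 ⊆ B.1 → S (Φ A) ⊆ S (Φ B))
    (hle : ∀ A : K, A.1 ⊆ S (Φ A)) (hcl : ∀ w, S (Φ ⟨S w, hS w⟩) = S w) :
    Nonempty (ContinuousMap.HomotopyEquiv (geomReal (chainComplex S)) (geomReal K)) := by
  classical
  have : Fintype K := Fintype.ofFinite K
  let f : C(geomReal (chainComplex S), geomReal K) :=
    ⟨fun x => ⟨barycenterMap S x.1, barycenterMap_mem_geomReal hK₀ hS x.2⟩,
      ((continuous_barycenterMap S).comp continuous_subtype_val).subtype_mk _⟩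
  let g : C(geomReal K, geomReal (chainComplex S)) :=
    ⟨fun y => ⟨levelMap Φ y.1, levelMap_mem_geomReal hK hΦ y.2⟩,
      (continuous_levelMap hK Φ).subtype_mk _⟩
  refine ⟨⟨f, g, homotopic_of_common_simplex _ _ fun x => ?_,
    homotopic_of_common_simplex _ _ fun y => ?_⟩⟩
  · obtain ⟨-, σ, ⟨hσ, hchain⟩, hxσ, -⟩ := x.2
    have hmem : ∀ u ∈ σ ∪ σ.image fun w => Φ ⟨S w, hS w⟩, ∃ w ∈ σ, S u = S w := by
      intro u hu
      rcases Finset.mem_union.1 hu with hu | hu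
      · exact ⟨u, hu, rfl⟩
      · obtain ⟨w, hw, rfl⟩ := Finset.mem_image.1 hu
        exact ⟨w, hw, hcl w⟩
    refine ⟨σ ∪ σ.image fun w => Φ ⟨S w, hS w⟩, ⟨hσ.mono Finset.subset_union_left, ?_⟩,
      fun w hw => ?_, fun w hw => Finset.mem_union_left _ (hxσ w hw)⟩
    · intro a ha b hb
      obtain ⟨a', ha', hSa⟩ := hmem a ha
      obtain ⟨b', hb', hSb⟩ := hmem b hb
      rw [hSa, hSb]
      exact hchain a' ha' b' hb'
    · obtain ⟨A, rfl, hA⟩ := exists_of_levelMap_ne_zero hw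
      obtain ⟨u, hu, hAu⟩ := exists_eq_of_levelWeight_barycenterMap_ne_zero
        (fun w => hK₀ _ (hS w)) x.2 (hK₀ _ A.2) hA
      obtain rfl : A = ⟨S u, hS u⟩ := Subtype.ext hAu
      exact Finset.mem_union_right _ (Finset.mem_image.2 ⟨u, hxσ u hu, rfl⟩)
  · obtain ⟨-, σ, hσ, hyσ, -⟩ := y.2
    refine ⟨S (Φ ⟨σ, hσ⟩), hS _, fun v hv => ?_, fun v hv => hle ⟨σ, hσ⟩ (hyσ v hv)⟩
    obtain ⟨w, hw, hvw⟩ := exists_of_barycenterMap_ne_zero hv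
    obtain ⟨A, rfl, hA⟩ := exists_of_levelMap_ne_zero hw
    exact hΦ A ⟨σ, hσ⟩
      (fun a ha => hyσ a ((levelWeight_ne_zero_iff.1 hA).1 a ha).ne') hvw

end ChainComplex

section Satisfiability

variable {n ℓ : ℕ}

open Classical in
/-- The set of truth assignments satisfying a formula. -/
noncomputable def models (φ : SatCNF n ℓ) : Finset (Fin n → Bool) :=
  Finset.univ.filter fun τ => Satisfies τ φ.1

theorem mem_models {φ : SatCNF n ℓ} {τ : Fin n → Bool} : τ ∈ models φ ↔ Satisfies τ φ.1 := by
  simp [models]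

theorem models_subset_iff {φ ψ : SatCNF n ℓ} : models φ ⊆ models ψ ↔ Implies φ.1 ψ.1 := by
  simp only [Finset.subset_iff, mem_models, Implies]

theorem satComplex_eq_chainComplex :
    satComplex n ℓ = chainComplex (models : SatCNF n ℓ → Finset (Fin n → Bool)) := by
  ext σ
  refine and_congr_right fun _ => ⟨?_, fun h => ?_⟩
  · rintro ⟨l, -, rfl, hl⟩ a ha b hb
    have : IsTrans (SatCNF n ℓ) fun φ ψ => Implies φ.1 ψ.1 :=
      ⟨fun _ _ _ h₁ h₂ τ hτ => h₂ τ (h₁ τ hτ)⟩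
    simp only [models_subset_iff]
    have : Std.Symm fun φ ψ : SatCNF n ℓ => Implies φ.1 ψ.1 ∨ Implies ψ.1 φ.1 :=
      ⟨fun _ _ => Or.symm⟩
    exact ((List.isChain_iff_pairwise.1 hl).imp Or.inl).forall_of_forall
      (R := fun φ ψ => Implies φ.1 ψ.1 ∨ Implies ψ.1 φ.1) (fun _ _ => Or.inl fun _ => id)
      (List.mem_toFinset.1 ha) (List.mem_toFinset.1 hb)
  · let r : SatCNF n ℓ → SatCNF n ℓ → Prop := fun φ ψ => (models φ).card ≤ (models ψ).card
    have : Std.Total r := ⟨fun _ _ => le_total _ _⟩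
    have : IsTrans _ r := ⟨fun _ _ _ => le_trans⟩
    classical
    have hperm := List.perm_insertionSort r σ.toList
    refine ⟨σ.toList.insertionSort r, hperm.nodup_iff.2 σ.nodup_toList,
      (List.toFinset_eq_of_perm _ _ hperm).trans σ.toList_toFinset, ?_⟩
    refine List.Pairwise.isChain
      (List.Pairwise.imp_of_mem ?_ (List.pairwise_insertionSort r σ.toList))
    intro φ ψ hφ hψ hr
    rw [hperm.mem_iff, Finset.mem_toList] at hφ hψ
    rw [← models_subset_iff]
    rcases h φ hφ ψ hψ with h | h
    · exact h
    · exact (Finset.eq_of_subset_of_card_le h hr).symm.subset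

/-- The assignments falsifying a clause form a face of the cube. -/
theorem exists_cubeEdge_of_clause (hℓn : ℓ ≤ n) (c : Clause n ℓ) :
    ∃ h ∈ cubeEdges n (n - ℓ), ∀ τ : Fin n → Bool, τ ∉ h ↔ ∃ x ∈ c.1, τ x.1 = x.2 := by
  have hinj : Set.InjOn Prod.fst (c.1 : Set (Fin n × Bool)) :=
    Finset.card_image_iff.1 (c.2.2.trans c.2.1.symm)
  classical
  refine ⟨_, ⟨c.1.image Prod.fst, fun i => decide ((i, false) ∈ c.1),
    c.2.2.trans (Nat.sub_sub_self hℓn).symm, rfl⟩, fun τ => ?_⟩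
  simp only [Set.mem_ofPred_eq, not_forall, Finset.mem_image, exists_prop]
  have key : ∀ x ∈ c.1, decide ((x.1, false) ∈ c.1) = !x.2 := by
    rintro ⟨i, b⟩ hx
    cases b
    · simpa using hx
    · simpa using fun h => by simpa using hinj hx h rfl
  constructor
  · rintro ⟨i, ⟨x, hx, rfl⟩, hne⟩
    rw [key x hx] at hne
    exact ⟨x, hx, by simpa using hne⟩
  · rintro ⟨x, hx, h⟩
    refine ⟨x.1, ⟨x, hx, rfl⟩, ?_⟩
    rw [key x hx, h]
    simp

/-- Every face of the cube is the set of assignments falsifying some clause. -/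
theorem exists_clause_of_mem_cubeEdges (hℓn : ℓ ≤ n) {h : Set (Fin n → Bool)}
    (hh : h ∈ cubeEdges n (n - ℓ)) :
    ∃ c : Clause n ℓ, ∀ τ : Fin n → Bool, τ ∉ h ↔ ∃ x ∈ c.1, τ x.1 = x.2 := by
  obtain ⟨s, g, hs, rfl⟩ := hh
  rw [Nat.sub_sub_self hℓn] at hs
  have hinj : Function.Injective fun i : Fin n => (i, !g i) := fun i j hij =>
    congrArg Prod.fst hij
  refine ⟨⟨s.image fun i => (i, !g i), ?_, ?_⟩, fun τ => ?_⟩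
  · rw [Finset.card_image_of_injective _ hinj, hs]
  · rw [Finset.image_image]
    exact (congrArg Finset.card Finset.image_id).trans hs
  · simp [Bool.eq_not]

theorem models_mem_thetaComplex (hℓn : ℓ ≤ n) (φ : SatCNF n ℓ) :
    models φ ∈ thetaComplex (cubeEdges n (n - ℓ)) := by
  obtain ⟨τ, hτ⟩ := φ.2
  obtain ⟨c, hc⟩ := φ.1.2
  obtain ⟨h, hh, hiff⟩ := exists_cubeEdge_of_clause hℓn c
  exact ⟨⟨τ, mem_models.2 hτ⟩, h, hh, fun v hv => (hiff v).2 (mem_models.1 hv c hc)⟩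

open Classical in
/-- The conjunction of all clauses satisfied by every assignment in a simplex of the theta
complex. -/
noncomputable def strongestFormula (hℓn : ℓ ≤ n)
    (A : thetaComplex (cubeEdges n (n - ℓ))) : SatCNF n ℓ :=
  ⟨⟨Finset.univ.filter fun c : Clause n ℓ => ∀ τ ∈ A.1, ∃ x ∈ c.1, τ x.1 = x.2, by
      obtain ⟨-, h, hh, hA⟩ := A.2
      obtain ⟨c, hc⟩ := exists_clause_of_mem_cubeEdges hℓn hh
      exact ⟨c, Finset.mem_filter.2
        ⟨Finset.mem_univ _, fun τ hτ => (hc τ).1 (hA τ hτ)⟩⟩⟩, by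
    obtain ⟨τ, hτ⟩ := A.2.1
    exact ⟨τ, fun c hc => (Finset.mem_filter.1 hc).2 τ hτ⟩⟩

theorem mem_strongestFormula {hℓn : ℓ ≤ n} {A : thetaComplex (cubeEdges n (n - ℓ))}
    {c : Clause n ℓ} :
    c ∈ (strongestFormula hℓn A).1.1 ↔ ∀ τ ∈ A.1, ∃ x ∈ c.1, τ x.1 = x.2 := by
  simp [strongestFormula]

theorem subset_models_strongestFormula (hℓn : ℓ ≤ n)
    (A : thetaComplex (cubeEdges n (n - ℓ))) : A.1 ⊆ models (strongestFormula hℓn A) :=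
  fun τ hτ => mem_models.2 fun _ hc => mem_strongestFormula.1 hc τ hτ

end Satisfiability

/-- For `1 ≤ ℓ ≤ n`, the complex `|ℓ-SAT-n|` of satisfiable
`ℓ`-conjunctive formulas in `n` variables is homotopy equivalent to
`Θ(Cube(n, n - ℓ))`. -/
theorem satComplex_homotopyEquiv_theta_cube (n ℓ : ℕ) (hn : 1 ≤ n) (hℓ : 1 ≤ ℓ)
    (hℓn : ℓ ≤ n) :
    Nonempty (ContinuousMap.HomotopyEquiv
      (↥(geomReal (satComplex n ℓ)))
      (↥(geomReal (thetaComplex (cubeEdges n (n - ℓ)))))) := by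
  classical
  rw [satComplex_eq_chainComplex]
  refine nonempty_homotopyEquiv_chainComplex (K := thetaComplex (cubeEdges n (n - ℓ)))
    (fun σ hσ => hσ.1) (fun σ ⟨_, h, hh, hσ⟩ τ hτ hne => ⟨hne, h, hh, fun v hv => hσ v (hτ hv)⟩)
    (models_mem_thetaComplex hℓn) (Φ := strongestFormula hℓn) (fun A B hAB τ hτ => ?_)
    (subset_models_strongestFormula hℓn) fun φ => ?_
  · exact mem_models.2 fun c hc => mem_models.1 hτ c
      (mem_strongestFormula.2 fun v hv => mem_strongestFormula.1 hc v (hAB hv))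
  · exact Finset.Subset.antisymm (fun τ hτ => mem_models.2 fun c hc => mem_models.1 hτ c
      (mem_strongestFormula.2 fun v hv => mem_models.1 hv c hc))
      (subset_models_strongestFormula hℓn ⟨_, models_mem_thetaComplex hℓn φ⟩)
end

section
/- Let P_n denote the cycle graph on n vertices (an n-sided polygon), n ≥ 3. Then Θ(P_n) is homotopy equivalent to a wedge of two copies of S^{2k−2} if n = 3k, to S^{2k−1} if n = 3k+1, and to S^{2k−1} if n = 3k+2. -/
/-- The unit sphere in `ℝ^d`, i.e. the sphere `S^{d-1}` (empty when `d = 0`). -/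
def sphereSpace (d : ℕ) : Set (EuclideanSpace ℝ (Fin d)) := Metric.sphere 0 1

/-- A base point on the unit sphere in `ℝ^d`, `d > 0`. -/
noncomputable def spherePt (d : ℕ) (hd : 0 < d) : ↥(sphereSpace d) :=
  ⟨EuclideanSpace.single (⟨0, hd⟩ : Fin d) 1, by
    simp [sphereSpace, EuclideanSpace.norm_single]⟩

/-- The wedge of copies of a pointed space `(X, x₀)` indexed by `ι`:
the disjoint union with all base points identified. -/
abbrev Wedge (ι : Type*) (X : Type*) [TopologicalSpace X] (x₀ : X) : Type _ :=
  Quot (fun a b : (Σ _ : ι, X) => a.2 = x₀ ∧ b.2 = x₀)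

/-- The cycle graph `P_n` on `n` vertices (an `n`-sided polygon): vertices
`ZMod n` and edges `{i, i+1}`. -/
def cycleEdges (n : ℕ) : Set (Set (ZMod n)) :=
  {e | ∃ i : ZMod n, e = ({i, i + 1} : Set (ZMod n))}


open scoped NNReal

/-- The support of a nonnegative weight function on a finite vertex set. -/
noncomputable def weightSupport {V : Type*} [Fintype V] (f : V → ℝ≥0) : Finset V :=
  open Classical in Finset.univ.filter fun v => f v ≠ 0

/-- The unnormalised realization of a family `D` of finite sets: the nonzero nonnegative weight
functions whose support belongs to `D`. -/
abbrev WeightSpace {V : Type*} [Fintype V] (D : Finset V → Prop) : Type _ :=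
  {f : V → ℝ≥0 // f ≠ 0 ∧ D (weightSupport f)}

section WeightSpace

variable {V : Type*}

open Classical in
/-- Transfer the amount `c` from every other vertex to the vertex `v`. -/
noncomputable def shiftTo (v : V) (c : ℝ≥0) (f : V → ℝ≥0) : V → ℝ≥0 :=
  fun u => if u = v then f u + c else f u - c

lemma continuous_shiftTo (v : V) : Continuous fun p : ℝ≥0 × (V → ℝ≥0) => shiftTo v p.1 p.2 := by
  refine continuous_pi fun u => ?_
  unfold shiftTo
  split_ifs <;> fun_prop

lemma shiftTo_zero (v : V) (f : V → ℝ≥0) : shiftTo v 0 f = f := by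
  funext u
  simp [shiftTo]

lemma shiftTo_ne_zero (v : V) {c : ℝ≥0} {f : V → ℝ≥0} (hf : f ≠ 0) : shiftTo v c f ≠ 0 := by
  rcases eq_or_ne c 0 with rfl | hc
  · rwa [shiftTo_zero]
  · intro h
    have := congrFun h v
    simp [shiftTo, hc] at this

variable [Fintype V]

lemma mem_weightSupport {f : V → ℝ≥0} {v : V} : v ∈ weightSupport f ↔ f v ≠ 0 := by
  simp [weightSupport]

open Classical in
/-- The smallest threshold `c` for which `{v | c < f v}` lies in the down-closed family `D`. -/
noncomputable def gap (D : Finset V → Prop) (h : D ∅) (f : V → ℝ≥0) : ℝ≥0 :=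
  (Finset.univ.filter D).inf' ⟨∅, by simpa using h⟩ fun τ => τᶜ.sup f

lemma continuous_gap (D : Finset V → Prop) (h : D ∅) : Continuous (gap D h) := by
  unfold gap
  refine Continuous.finset_inf'_apply _ fun τ _ => ?_
  exact Continuous.finset_sup_apply fun v _ => continuous_apply v

lemma exists_gap_eq (D : Finset V → Prop) (h : D ∅) (f : V → ℝ≥0) :
    ∃ τ, D τ ∧ ∀ v ∉ τ, f v ≤ gap D h f := by
  classical
  obtain ⟨τ, hτ, e⟩ := Finset.exists_mem_eq_inf' (s := Finset.univ.filter D)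
    ⟨∅, by simpa using h⟩ fun τ => τᶜ.sup f
  refine ⟨τ, by simpa using hτ, fun v hv => ?_⟩
  have : gap D h f = τᶜ.sup f := by
    unfold gap
    convert e
  rw [this]
  exact Finset.le_sup (f := f) (by simpa using hv)

lemma gap_eq_zero {D : Finset V → Prop} (h : D ∅) {f : V → ℝ≥0} (hf : D (weightSupport f)) :
    gap D h f = 0 := by
  classical
  apply le_antisymm _ zero_le
  unfold gap
  refine (Finset.inf'_le _ (b := weightSupport f) (by simpa using hf)).trans ?_
  refine Finset.sup_le fun v hv => ?_
  simpa [mem_weightSupport] using hv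

lemma weightSupport_shiftTo_subset [DecidableEq V] (v : V) (c : ℝ≥0) (f : V → ℝ≥0) :
    weightSupport (shiftTo v c f) ⊆ insert v (weightSupport f) := by
  intro u hu
  rw [mem_weightSupport] at hu
  rw [Finset.mem_insert, mem_weightSupport]
  by_cases h : u = v
  · exact Or.inl h
  · refine Or.inr fun h0 => hu ?_
    simp [shiftTo, h, h0]

/-- The toggling criterion: if the sets of `E` that are not in `D` are stable under adding and
removing `v`, then `D` and `E` have homotopy equivalent realizations. -/
theorem nonempty_homotopyEquiv_of_toggle [DecidableEq V] {D E : Finset V → Prop} (v : V)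
    (hD : ∀ σ τ, σ ⊆ τ → D τ → D σ) (hE : ∀ σ τ, σ ⊆ τ → E τ → E σ) (hD0 : D ∅)
    (hDE : ∀ σ, D σ → E σ) (hadd : ∀ σ, E σ → ¬ D σ → E (insert v σ))
    (hremove : ∀ σ, D σ → E (insert v σ) → D (insert v σ)) :
    Nonempty (ContinuousMap.HomotopyEquiv (WeightSpace E) (WeightSpace D)) := by
  have key : ∀ (t : ℝ≥0) (f : WeightSpace E),
      E (weightSupport (shiftTo v (t * gap D hD0 f.1) f.1)) := by
    intro t f
    by_cases h : D (weightSupport f.1)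
    · rw [gap_eq_zero hD0 h, mul_zero, shiftTo_zero]
      exact f.2.2
    · exact hE _ _ (weightSupport_shiftTo_subset _ _ _) (hadd _ f.2.2 h)
  have key1 : ∀ f : WeightSpace E, D (weightSupport (shiftTo v (gap D hD0 f.1) f.1)) := by
    intro f
    by_cases h : D (weightSupport f.1)
    · rwa [gap_eq_zero hD0 h, shiftTo_zero]
    · obtain ⟨τ, hτ, hle⟩ := exists_gap_eq D hD0 f.1
      have h1 : D (τ ∩ weightSupport f.1) := hD _ _ Finset.inter_subset_left hτ
      refine hD _ _ ?_ (hremove _ h1 (hE _ _ ?_ (hadd _ f.2.2 h)))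
      · intro u hu
        rw [mem_weightSupport] at hu
        by_cases huv : u = v
        · simp [huv]
        · rw [Finset.mem_insert, Finset.mem_inter, mem_weightSupport]
          simp only [shiftTo, huv, if_false] at hu
          refine Or.inr ⟨?_, fun h0 => hu (by simp [h0])⟩
          by_contra hn
          exact hu (tsub_eq_zero_of_le (hle u hn))
      · exact Finset.insert_subset_insert _ Finset.inter_subset_right
  have cgap : Continuous fun f : WeightSpace E => gap D hD0 f.1 :=
    (continuous_gap D hD0).comp continuous_subtype_val
  let r : C(WeightSpace E, WeightSpace D) :=
    ⟨fun f => ⟨shiftTo v (gap D hD0 f.1) f.1, shiftTo_ne_zero v f.2.1, key1 f⟩,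
      ((continuous_shiftTo v).comp (cgap.prodMk continuous_subtype_val)).subtype_mk _⟩
  let i : C(WeightSpace D, WeightSpace E) :=
    ⟨fun f => ⟨f.1, f.2.1, hDE _ f.2.2⟩, continuous_subtype_val.subtype_mk _⟩
  refine ⟨⟨r, i, ⟨?_⟩, ?_⟩⟩
  · refine ContinuousMap.Homotopy.symm ⟨⟨fun p : unitInterval × WeightSpace E =>
      ⟨shiftTo v (unitInterval.toNNReal p.1 * gap D hD0 p.2.1) p.2.1,
        shiftTo_ne_zero v p.2.2.1, key _ p.2⟩, ?_⟩, ?_, ?_⟩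
    · refine ((continuous_shiftTo v).comp (Continuous.prodMk ?_ ?_)).subtype_mk _
      · exact (unitInterval.toNNReal_continuous.comp continuous_fst).mul
          (cgap.comp continuous_snd)
      · exact continuous_subtype_val.comp continuous_snd
    · intro f
      simp [shiftTo_zero]
    · intro f
      simp [r, i]
  · have : r.comp i = ContinuousMap.id _ := by
      ext1 f
      apply Subtype.ext
      simp [r, i, gap_eq_zero hD0 f.2.2, shiftTo_zero]
    rw [this]

end WeightSpace

section Theta

/-- Normalising weights identifies the geometric realization of a complex with its unnormalised
realization up to homotopy. -/
theorem nonempty_homotopyEquiv_geomReal {V : Type*} [Fintype V] {K : Set (Finset V)}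
    {D : Finset V → Prop} (hD : ∀ σ τ, σ ⊆ τ → D τ → D σ)
    (hK : ∀ σ, σ ∈ K ↔ σ.Nonempty ∧ D σ) :
    Nonempty (ContinuousMap.HomotopyEquiv (geomReal K) (WeightSpace D)) := by
  classical
  have sum_ne : ∀ f : WeightSpace D, ∑ v, f.1 v ≠ 0 := fun f h => f.2.1 <| by
    funext v
    simpa using (Finset.sum_eq_zero_iff.1 h) v (Finset.mem_univ v)
  have csum : Continuous fun f : WeightSpace D => ∑ v, f.1 v :=
    continuous_finsetSum _ fun v _ => (continuous_apply v).comp continuous_subtype_val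
  have cval : ∀ v, Continuous fun f : WeightSpace D => f.1 v := fun v =>
    (continuous_apply v).comp continuous_subtype_val
  let F : C(geomReal K, WeightSpace D) := ⟨fun f => ⟨fun v => (f.1 v).toNNReal, by
      obtain ⟨f, hf, σ, hσ, hs, h1⟩ := f
      constructor
      · intro h
        have : ∑ v ∈ σ, f v = 0 := Finset.sum_eq_zero fun v _ => by
          have := congrFun h v
          exact le_antisymm (by simpa using this) (hf v)
        simp [this] at h1
      · refine hD _ _ (fun v hv => hs v fun h0 => ?_) ((hK σ).1 hσ).2
        rw [mem_weightSupport] at hv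
        exact hv (by simp [h0])⟩, by
      refine Continuous.subtype_mk (continuous_pi fun v => continuous_real_toNNReal.comp
        ((continuous_apply v).comp continuous_subtype_val)) _⟩
  let G : C(WeightSpace D, geomReal K) := ⟨fun f => ⟨fun v => (f.1 v / ∑ u, f.1 u : ℝ≥0), by
      refine ⟨fun v => NNReal.coe_nonneg _, weightSupport f.1, ?_, ?_, ?_⟩
      · refine (hK _).2 ⟨?_, f.2.2⟩
        obtain ⟨v, hv⟩ := Function.ne_iff.1 f.2.1
        exact ⟨v, mem_weightSupport.2 hv⟩
      · intro v hv
        rw [mem_weightSupport]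
        intro h0
        simp [h0] at hv
      · rw [← NNReal.coe_sum, ← Finset.sum_div]
        have : ∑ v ∈ weightSupport f.1, f.1 v = ∑ v, f.1 v :=
          Finset.sum_subset (Finset.subset_univ _) fun v _ hv => by
            simpa [mem_weightSupport] using hv
        rw [this, div_self (sum_ne f), NNReal.coe_one]⟩, by
      refine Continuous.subtype_mk (continuous_pi fun v => NNReal.continuous_coe.comp ?_) _
      exact (cval v).div₀ csum sum_ne⟩
  refine ⟨⟨F, G, ?_, ⟨ContinuousMap.Homotopy.symm ?_⟩⟩⟩
  · have : G.comp F = ContinuousMap.id _ := by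
      ext f v
      obtain ⟨f, hf, σ, hσ, hs, h1⟩ := f
      have h2 : ∑ v, (f v).toNNReal = 1 := by
        rw [← NNReal.coe_inj, NNReal.coe_sum, NNReal.coe_one, ← h1]
        simp only [Real.coe_toNNReal _ (hf _)]
        exact (Finset.sum_subset (Finset.subset_univ _) fun v _ hv => by
            by_contra h; exact hv (hs v h)).symm
      change (((f v).toNNReal / ∑ u, (f u).toNNReal : ℝ≥0) : ℝ) = f v
      rw [h2, div_one, Real.coe_toNNReal _ (hf v)]
    rw [this]
  · let c : unitInterval × WeightSpace D → ℝ≥0 := fun p =>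
      unitInterval.toNNReal (unitInterval.symm p.1) +
        unitInterval.toNNReal p.1 / ∑ u, p.2.1 u
    have hc : ∀ p, c p ≠ 0 := by
      intro p h
      obtain ⟨h1, h2⟩ := add_eq_zero.1 h
      have h3 : unitInterval.toNNReal p.1 = 0 := by simpa [sum_ne p.2] using h2
      have := unitInterval.toNNReal_add_toNNReal_symm p.1
      simp [h1, h3] at this
    refine ⟨⟨fun p => ⟨fun v => c p * p.2.1 v, ?_, ?_⟩, ?_⟩, ?_, ?_⟩
    · obtain ⟨v, hv⟩ := Function.ne_iff.1 p.2.2.1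
      exact Function.ne_iff.2 ⟨v, mul_ne_zero (hc p) hv⟩
    · convert p.2.2.2 using 1
      ext v
      simp [mem_weightSupport, hc p]
    · refine Continuous.subtype_mk (continuous_pi fun v => ?_) _
      refine Continuous.mul (Continuous.add ?_ ?_) ((cval v).comp continuous_snd)
      · exact unitInterval.toNNReal_continuous.comp
          (unitInterval.continuous_symm.comp continuous_fst)
      · exact (unitInterval.toNNReal_continuous.comp continuous_fst).div₀
          (csum.comp continuous_snd) fun p => sum_ne p.2
    · intro f
      apply Subtype.ext
      simp [c]
    · intro f
      apply Subtype.ext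
      funext v
      change c (1, f) * f.1 v = Real.toNNReal ((f.1 v / ∑ u, f.1 u : ℝ≥0) : ℝ)
      rw [Real.toNNReal_coe]
      simp [c, div_eq_inv_mul]

end Theta

section Glue

variable {Y A S : Type*} [TopologicalSpace Y] [TopologicalSpace A] [TopologicalSpace S]

/-- A space covered by two closed copies of `A`, glued along a subset `C` which can be shrunk to a
point inside `A`, is homotopy equivalent to a wedge of two copies of `S ≃ A`. -/
theorem nonempty_homotopyEquiv_wedge {x₀ : S} (C : Set A) (l : Fin 2 → C(A, Y)) (ρ : C(Y, A))
    (side : Fin 2 → Set Y) (hclosed : ∀ i, IsClosed (side i)) (hcover : side 0 ∪ side 1 = Set.univ)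
    (hside : ∀ i x, l i x ∈ side i) (hlρ : ∀ i, ∀ y ∈ side i, l i (ρ y) = y)
    (hρl : ∀ i x, ρ (l i x) = x) (hC : ∀ y ∈ side 0 ∩ side 1, ρ y ∈ C)
    (hlC : ∀ x ∈ C, l 0 x = l 1 x) (p : C(A, S)) (j : C(S, A)) (hp : ∀ x ∈ C, p x = x₀)
    (hj : j x₀ ∈ C) (H : (ContinuousMap.id A).Homotopy (j.comp p))
    (hH : ∀ t, ∀ x ∈ C, H (t, x) ∈ C)
    (K : (ContinuousMap.id S).Homotopy (p.comp j)) (hK : ∀ t, K (t, x₀) = x₀) :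
    Nonempty (ContinuousMap.HomotopyEquiv Y (Wedge (Fin 2) S x₀)) := by
  classical
  let mk : Fin 2 → S → Wedge (Fin 2) S x₀ := fun i s => Quot.mk _ ⟨i, s⟩
  have cmk : ∀ i, Continuous (mk i) := fun i => continuous_quot_mk.comp continuous_sigmaMk
  have hmk : ∀ i i', mk i x₀ = mk i' x₀ := fun i i' => Quot.sound ⟨rfl, rfl⟩
  have hlC' : ∀ i i', ∀ x ∈ C, l i x = l i' x := by
    intro i i' x hx
    fin_cases i <;> fin_cases i' <;> simp [hlC x hx]
  have hC' : ∀ i i' y, i ≠ i' → y ∈ side i → y ∈ side i' → ρ y ∈ C := by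
    intro i i' y hne h h'
    fin_cases i <;> fin_cases i' <;> 
      first | exact absurd rfl hne | exact hC y ⟨by assumption, by assumption⟩
  let idx : Y → Fin 2 := fun y => if y ∈ side 0 then 0 else 1
  have hidx : ∀ y, y ∈ side (idx y) := by
    intro y
    by_cases h : y ∈ side 0
    · simp [idx, h]
    · have : y ∈ side 0 ∪ side 1 := hcover ▸ Set.mem_univ y
      simpa [idx, h] using this
  have hidx' : ∀ i, ∀ y ∈ side i, idx y = i ∨ ρ y ∈ C := by
    intro i y hy
    by_cases h : idx y = i
    · exact Or.inl h
    · exact Or.inr (hC' _ _ y h (hidx y) hy)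
  -- the map collapsing `C`
  let P : C(Y, Wedge (Fin 2) S x₀) := ⟨fun y => mk (idx y) (p (ρ y)), by
    have h : ∀ i, ContinuousOn (fun y => mk (idx y) (p (ρ y))) (side i) := by
      intro i
      refine ContinuousOn.congr (f := fun y => mk i (p (ρ y)))
        ((cmk i).comp (p.continuous.comp ρ.continuous)).continuousOn fun y hy => ?_
      rcases hidx' i y hy with h | h
      · rw [h]
      · simp only [hp _ h]
        exact hmk _ _
    rw [← continuousOn_univ, ← hcover]
    exact (h 0).union_of_isClosed (h 1) (hclosed 0) (hclosed 1)⟩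
  have hP : ∀ i, ∀ y ∈ side i, P y = mk i (p (ρ y)) := by
    intro i y hy
    rcases hidx' i y hy with h | h
    · simp [P, h]
    · simp only [P, ContinuousMap.coe_mk, hp _ h]
      exact hmk _ _
  let J : C(Wedge (Fin 2) S x₀, Y) := ⟨Quot.lift (fun a => l a.1 (j a.2)) (by
      rintro ⟨i, s⟩ ⟨i', s'⟩ ⟨rfl, h⟩
      dsimp only at h ⊢
      rw [h]
      exact hlC' _ _ _ hj), by
      refine continuous_quot_lift _ ?_
      exact continuous_sigma fun i => (l i).continuous.comp j.continuous⟩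
  have hJ : ∀ i s, J (mk i s) = l i (j s) := fun i s => rfl
  refine ⟨⟨P, J, ⟨ContinuousMap.Homotopy.symm ?_⟩, ⟨ContinuousMap.Homotopy.symm ?_⟩⟩⟩
  · refine ⟨⟨fun q => l (idx q.2) (H (q.1, ρ q.2)), ?_⟩, ?_, ?_⟩
    · have h : ∀ i, ContinuousOn (fun q : unitInterval × Y => l (idx q.2) (H (q.1, ρ q.2)))
          (Prod.snd ⁻¹' side i) := by
        intro i
        refine ContinuousOn.congr (f := fun q : unitInterval × Y => l i (H (q.1, ρ q.2)))
          (by fun_prop) fun q hq => ?_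
        rcases hidx' i q.2 hq with h | h
        · simp only [h]
        · exact hlC' _ _ _ (hH _ _ h)
      rw [← continuousOn_univ, ← Set.preimage_univ (f := Prod.snd), ← hcover, Set.preimage_union]
      exact (h 0).union_of_isClosed (h 1) ((hclosed 0).preimage continuous_snd)
        ((hclosed 1).preimage continuous_snd)
    · intro y
      simpa using hlρ _ y (hidx y)
    · intro y
      simp [P, hJ]
  · let Q : unitInterval × Wedge (Fin 2) S x₀ → Wedge (Fin 2) S x₀ := fun q =>
      Quot.lift (fun a : (Σ _ : Fin 2, S) => mk a.1 (K (q.1, a.2))) (by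
        rintro ⟨i, s⟩ ⟨i', s'⟩ ⟨h', h⟩
        dsimp only at h h' ⊢
        rw [h, h', hK]
        exact hmk _ _) q.2
    refine ⟨⟨Q, ?_⟩, ?_, ?_⟩
    · refine isQuotientMap_quot_mk.continuous_lift_prod_right (g := Q) ?_
      let e : (unitInterval × Σ _ : Fin 2, S) → Wedge (Fin 2) S x₀ :=
        fun q => mk q.2.1 (K (q.1, q.2.2))
      change Continuous e
      have hsw : Continuous fun r : (Σ _ : Fin 2, S × unitInterval) =>
          mk r.1 (K (r.2.2, r.2.1)) :=
        continuous_sigma fun i => (cmk i).comp (by fun_prop)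
      exact hsw.comp ((Homeomorph.sigmaProdDistrib (X := fun _ : Fin 2 => S)).continuous.comp
        continuous_swap)
    · rintro ⟨i, s⟩
      change mk i (K (0, s)) = mk i s
      simp
    · rintro ⟨i, s⟩
      change mk i (K (1, s)) = P (l i (j s))
      rw [hP i _ (hside _ _), hρl]
      simp

end Glue

section Punctured

/-- Euclidean space with the origin removed. -/
abbrev Punctured (m : ℕ) : Type := {x : EuclideanSpace ℝ (Fin m) // x ≠ 0}

/-- Radial projection to the unit sphere. -/
noncomputable def radial {m : ℕ} : C(Punctured m, sphereSpace m) :=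
  ⟨fun x => ⟨‖x.1‖⁻¹ • x.1, by
      simp [sphereSpace, norm_smul, inv_mul_cancel₀ (norm_ne_zero_iff.2 x.2)]⟩, by
    refine Continuous.subtype_mk ?_ _
    exact (continuous_subtype_val.norm.inv₀ fun x => norm_ne_zero_iff.2 x.2).smul
      continuous_subtype_val⟩

/-- The inclusion of the unit sphere into punctured Euclidean space. -/
def sphereIncl {m : ℕ} : C(sphereSpace m, Punctured m) :=
  ⟨fun s => ⟨s.1, by
      have h : s.1 ∈ Metric.sphere (0 : EuclideanSpace ℝ (Fin m)) 1 := s.2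
      intro h0
      simp [h0] at h⟩, continuous_subtype_val.subtype_mk _⟩

lemma radial_eq_of_smul {m : ℕ} (x : Punctured m) (s : sphereSpace m) {c : ℝ} (hc : 0 < c)
    (h : x.1 = c • s.1) : radial x = s := by
  have hs : ‖s.1‖ = 1 := by simpa [sphereSpace] using s.2
  apply Subtype.ext
  change ‖x.1‖⁻¹ • x.1 = s.1
  rw [h, norm_smul, hs, mul_one, Real.norm_of_nonneg hc.le, smul_smul, inv_mul_cancel₀ hc.ne',
    one_smul]

lemma radial_sphereIncl {m : ℕ} (s : sphereSpace m) : radial (sphereIncl s) = s :=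
  radial_eq_of_smul _ _ one_pos (one_smul ℝ s.1).symm

lemma convexWeights_pos (t : unitInterval) {c : ℝ} (hc : 0 < c) :
    0 < (1 - (t : ℝ)) + t * c := by
  rcases t.2.1.eq_or_lt with h | h
  · simp [← h]
  · have := t.2.2
    have := mul_pos h hc
    linarith

theorem nonempty_homotopyEquiv_punctured (m : ℕ) :
    Nonempty (ContinuousMap.HomotopyEquiv (Punctured m) (sphereSpace m)) := by
  refine ⟨⟨radial, sphereIncl, ⟨ContinuousMap.Homotopy.symm ?_⟩, ?_⟩⟩
  · refine ⟨⟨fun q : unitInterval × Punctured m =>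
      ⟨((1 - (q.1 : ℝ)) + q.1 * ‖q.2.1‖⁻¹) • q.2.1, smul_ne_zero
        (convexWeights_pos _ (inv_pos.2 (norm_pos_iff.2 q.2.2))).ne' q.2.2⟩, ?_⟩, ?_, ?_⟩
    · have h : Continuous fun q : unitInterval × Punctured m => ‖q.2.1‖⁻¹ :=
        (continuous_subtype_val.comp continuous_snd).norm.inv₀ fun q =>
          norm_ne_zero_iff.2 q.2.2
      refine Continuous.subtype_mk ?_ _
      fun_prop
    · intro x
      simp
    · intro x
      apply Subtype.ext
      simp [radial, sphereIncl]
  · have : radial.comp sphereIncl = ContinuousMap.id (sphereSpace m) := by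
      ext1 s
      exact radial_sphereIncl s
    rw [this]

/-- The vector all of whose coordinates are one. -/
noncomputable def onesVec (m : ℕ) : EuclideanSpace ℝ (Fin m) := WithLp.toLp 2 fun _ => 1

/-- Collapse the nonnegative orthant onto the diagonal ray. -/
noncomputable def collapse {m : ℕ} (x : EuclideanSpace ℝ (Fin m)) : EuclideanSpace ℝ (Fin m) :=
  WithLp.toLp 2 fun i => ∑ k, max (x k) 0 - max (-x i) 0

lemma continuous_collapse {m : ℕ} : Continuous (collapse (m := m)) := by
  unfold collapse
  fun_prop

lemma collapse_of_nonneg {m : ℕ} {x : EuclideanSpace ℝ (Fin m)} (hx : ∀ i, 0 ≤ x i) :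
    collapse x = (∑ k, x k) • onesVec m := by
  ext i
  simp [collapse, onesVec, hx]

lemma smul_add_smul_collapse_ne_zero {m : ℕ} {x : EuclideanSpace ℝ (Fin m)} (hx : x ≠ 0)
    {α β : ℝ} (hα : 0 ≤ α) (hβ : 0 ≤ β) (h : 0 < α + β) : α • x + β • collapse x ≠ 0 := by
  by_cases hpos : ∃ i, 0 < x i
  · obtain ⟨i, hi⟩ := hpos
    intro h0
    have h1 : α * x i + β * (∑ k, max (x k) 0 - max (-x i) 0) = 0 := by
      simpa [collapse] using congrArg (fun y : EuclideanSpace ℝ (Fin m) => y i) h0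
    rw [max_eq_right (by linarith : -x i ≤ 0), sub_zero] at h1
    have h2 : 0 < ∑ k, max (x k) 0 :=
      lt_of_lt_of_le (lt_max_of_lt_left hi) (Finset.single_le_sum
        (f := fun k => max (x k) 0) (fun k _ => le_max_right _ _) (Finset.mem_univ i))
    have h3 : 0 < α * x i + β * ∑ k, max (x k) 0 := by
      rcases hα.eq_or_lt with ha | ha
      · have : 0 < β := by linarith
        rw [← ha, zero_mul, zero_add]
        exact mul_pos this h2
      · have := mul_pos ha hi
        have := mul_nonneg hβ h2.le
        linarith
    exact h3.ne' h1
  · push Not at hpos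
    have : collapse x = x := by
      ext i
      simp [collapse, hpos]
    rw [this, ← add_smul]
    exact smul_ne_zero h.ne' hx

lemma sum_pos_of_nonneg {m : ℕ} {x : EuclideanSpace ℝ (Fin m)} (h0 : x ≠ 0) (hx : ∀ i, 0 ≤ x i) :
    0 < ∑ k, x k := by
  refine lt_of_le_of_ne (Finset.sum_nonneg fun i _ => hx i) fun h => h0 ?_
  ext i
  simpa using (Finset.sum_eq_zero_iff_of_nonneg fun i _ => hx i).1 h.symm i (Finset.mem_univ i)

/-- The nonnegative orthant in punctured Euclidean space can be shrunk to the base point of the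
sphere. -/
theorem exists_collapse_orthant (m : ℕ) (hm : 0 < m) :
    ∃ (p : C(Punctured m, sphereSpace m)) (j : C(sphereSpace m, Punctured m))
      (H : (ContinuousMap.id _).Homotopy (j.comp p)) (K : (ContinuousMap.id _).Homotopy (p.comp j)),
      (∀ x : Punctured m, (∀ i, 0 ≤ x.1 i) → p x = spherePt m hm) ∧
      (∀ i, 0 ≤ (j (spherePt m hm)).1 i) ∧
      (∀ t, ∀ x : Punctured m, (∀ i, 0 ≤ x.1 i) → ∀ i, 0 ≤ (H (t, x)).1 i) ∧
      ∀ t, K (t, spherePt m hm) = spherePt m hm := by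
  have hones : onesVec m ≠ 0 := fun h => by
    simpa [onesVec] using congrArg (fun y : EuclideanSpace ℝ (Fin m) => y ⟨0, hm⟩) h
  obtain ⟨T, hT⟩ := SeparatingDual.exists_continuousLinearEquiv_apply_eq (R := ℝ) hones
    (sphereIncl (spherePt m hm)).2
  have hT' : T.symm (spherePt m hm).1 = onesVec m := by
    rw [ContinuousLinearEquiv.symm_apply_eq]
    exact hT.symm
  have hTne : ∀ {x}, x ≠ 0 → T x ≠ 0 := fun h h0 => h (by simpa using h0)
  have hTsne : ∀ {x}, x ≠ 0 → T.symm x ≠ 0 := fun h h0 => h (by simpa using h0)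
  have hcol : ∀ x : Punctured m, collapse x.1 ≠ 0 := fun x => by
    simpa using smul_add_smul_collapse_ne_zero x.2 (le_refl (0 : ℝ)) zero_le_one (by simp)
  have ccol : Continuous fun x : Punctured m => collapse x.1 :=
    continuous_collapse.comp continuous_subtype_val
  let p : C(Punctured m, sphereSpace m) := radial.comp
    ⟨fun x => ⟨T (collapse x.1), hTne (hcol x)⟩, (T.continuous.comp ccol).subtype_mk _⟩
  let j : C(sphereSpace m, Punctured m) :=
    ⟨fun s => ⟨T.symm s.1, hTsne (sphereIncl s).2⟩,
      (T.symm.continuous.comp continuous_subtype_val).subtype_mk _⟩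
  let c : Punctured m → ℝ := fun x => ‖T (collapse x.1)‖⁻¹
  have hc : ∀ x, 0 < c x := fun x => inv_pos.2 (norm_pos_iff.2 (hTne (hcol x)))
  have cc : Continuous c := (T.continuous.comp ccol).norm.inv₀
    fun x => norm_ne_zero_iff.2 (hTne (hcol x))
  have hjp : ∀ x, (j (p x)).1 = c x • collapse x.1 := fun x => by
    change T.symm (‖T (collapse x.1)‖⁻¹ • T (collapse x.1)) = _
    simp [c]
  let H : (ContinuousMap.id _).Homotopy (j.comp p) :=
    ⟨⟨fun q => ⟨(1 - (q.1 : ℝ)) • q.2.1 + ((q.1 : ℝ) * c q.2) • collapse q.2.1,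
        smul_add_smul_collapse_ne_zero q.2.2 (sub_nonneg.2 q.1.2.2)
          (mul_nonneg q.1.2.1 (hc _).le) (convexWeights_pos _ (hc _))⟩, by
        refine Continuous.subtype_mk ?_ _
        have := cc.comp (continuous_snd (X := unitInterval))
        have := ccol.comp (continuous_snd (X := unitInterval))
        fun_prop⟩,
      fun x => by simp, fun x => Subtype.ext (by simp [hjp])⟩
  let L : unitInterval × sphereSpace m → EuclideanSpace ℝ (Fin m) := fun q =>
    (1 - (q.1 : ℝ)) • T.symm q.2.1 + (q.1 : ℝ) • collapse (T.symm q.2.1)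
  have hL : ∀ q, L q ≠ 0 := fun q =>
    smul_add_smul_collapse_ne_zero (j q.2).2 (sub_nonneg.2 q.1.2.2) q.1.2.1 (by simp)
  have cL : Continuous L := by
    have : Continuous fun q : unitInterval × sphereSpace m => T.symm q.2.1 :=
      T.symm.continuous.comp (continuous_subtype_val.comp continuous_snd)
    have := continuous_collapse.comp this
    fun_prop
  let K : (ContinuousMap.id _).Homotopy (p.comp j) :=
    ⟨⟨fun q => radial ⟨T (L q), hTne (hL q)⟩,
      radial.continuous.comp ((T.continuous.comp cL).subtype_mk _)⟩,
      fun s => radial_eq_of_smul _ _ one_pos (by simp [L]), fun s => by simp [L, p, j]⟩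
  refine ⟨p, j, H, K, ?_, ?_, ?_, ?_⟩
  · intro x hx
    refine radial_eq_of_smul _ _ (sum_pos_of_nonneg x.2 hx) ?_
    change T (collapse x.1) = _
    rw [collapse_of_nonneg hx, map_smul, hT]
    rfl
  · intro i
    change 0 ≤ T.symm (spherePt m hm).1 i
    rw [hT']
    simp [onesVec]
  · intro t x hx i
    change 0 ≤ ((1 - (t : ℝ)) • x.1 + ((t : ℝ) * c x) • collapse x.1) i
    rw [collapse_of_nonneg hx]
    have h1 := mul_nonneg (sub_nonneg.2 t.2.2) (hx i)
    have h2 := mul_nonneg (mul_nonneg t.2.1 (hc x).le) (sum_pos_of_nonneg x.2 hx).le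
    simpa [onesVec] using add_nonneg h1 h2
  · intro t
    have h : ∀ i, 0 ≤ onesVec m i := fun i => by simp [onesVec]
    have hs := sum_pos_of_nonneg hones h
    refine radial_eq_of_smul _ _ (convexWeights_pos t hs) ?_
    change T ((1 - (t : ℝ)) • T.symm (spherePt m hm).1 +
      (t : ℝ) • collapse (T.symm (spherePt m hm).1)) = _
    rw [hT', collapse_of_nonneg h, smul_smul, ← add_smul, map_smul, hT]
    rfl

end Punctured

section Models

/-- The largest absolute value of a negative coordinate. -/
noncomputable def depth {m : ℕ} (x : EuclideanSpace ℝ (Fin m)) : ℝ≥0 :=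
  Finset.univ.sup fun i => (-x i).toNNReal

lemma continuous_depth {m : ℕ} : Continuous (depth (m := m)) := by
  refine Continuous.finset_sup_apply fun i _ => ?_
  fun_prop

lemma neg_le_depth {m : ℕ} (x : EuclideanSpace ℝ (Fin m)) (i : Fin m) : -x i ≤ depth x := by
  rw [← Real.toNNReal_le_iff_le_coe]
  exact Finset.le_sup (f := fun i => (-x i).toNNReal) (Finset.mem_univ i)

lemma depth_eq_zero {m : ℕ} {x : EuclideanSpace ℝ (Fin m)} (hx : ∀ i, 0 ≤ x i) : depth x = 0 := by
  refine le_antisymm (Finset.sup_le fun i _ => ?_) zero_le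
  simp [hx i]

lemma exists_add_depth_eq_zero {m : ℕ} {x : EuclideanSpace ℝ (Fin m)} (hx : depth x ≠ 0) :
    ∃ i, x i + depth x = 0 := by
  have hne : (Finset.univ : Finset (Fin m)).Nonempty := by
    rw [Finset.nonempty_iff_ne_empty]
    intro h
    exact hx (by simp [depth, h])
  obtain ⟨i, -, hi⟩ := Finset.exists_mem_eq_sup _ hne fun i => (-x i).toNNReal
  have hi' : depth x = (-x i).toNNReal := hi
  refine ⟨i, ?_⟩
  have : 0 < -x i := by
    rw [← Real.toNNReal_pos, ← hi']
    exact pos_iff_ne_zero.2 hx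
  rw [hi', Real.coe_toNNReal _ this.le]
  ring

variable {V : Type*} {m : ℕ}

open Classical in
/-- The point of the boundary of an orthant (with coordinates `w i` and `a`) whose coordinate
differences with respect to `a` are the entries of `x`. -/
noncomputable def orthantLift (w : Fin m → V) (a : V) (x : EuclideanSpace ℝ (Fin m)) : V → ℝ≥0 :=
  fun u => (∑ i, if w i = u then (x i + depth x).toNNReal else 0) + if a = u then depth x else 0

lemma continuous_orthantLift (w : Fin m → V) (a : V) : Continuous (orthantLift w a) := by
  have := continuous_depth (m := m)
  refine continuous_pi fun u => Continuous.add (continuous_finsetSum _ fun i _ => ?_) ?_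
  · split_ifs <;> fun_prop
  · split_ifs <;> fun_prop

section

variable {w : Fin m → V} {a : V}

lemma coe_orthantLift_apply (hw : Function.Injective w) (ha : ∀ i, w i ≠ a)
    (x : EuclideanSpace ℝ (Fin m)) (i : Fin m) :
    (orthantLift w a x (w i) : ℝ) = x i + depth x := by
  have h := neg_le_depth x i
  simp only [orthantLift, hw.eq_iff, (ha i).symm, if_false, add_zero, Finset.sum_ite_eq',
    Finset.mem_univ, if_true]
  exact Real.coe_toNNReal _ (by linarith)

lemma orthantLift_apex (ha : ∀ i, w i ≠ a) (x : EuclideanSpace ℝ (Fin m)) :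
    orthantLift w a x a = depth x := by
  simp [orthantLift, ha]

lemma orthantLift_of_notMem (x : EuclideanSpace ℝ (Fin m)) {u : V} (hu : ∀ i, w i ≠ u)
    (hau : a ≠ u) : orthantLift w a x u = 0 := by
  simp [orthantLift, hu, hau]

lemma orthantLift_ne_zero (hw : Function.Injective w) (ha : ∀ i, w i ≠ a)
    {x : EuclideanSpace ℝ (Fin m)} (hx : x ≠ 0) : orthantLift w a x ≠ 0 := by
  intro h
  apply hx
  ext i
  have h1 := orthantLift_apex ha x
  have h2 := coe_orthantLift_apply hw ha x i
  simp only [h, Pi.zero_apply, NNReal.coe_zero] at h1 h2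
  rw [← h1] at h2
  simpa using h2.symm

lemma exists_orthantLift_eq_zero (hw : Function.Injective w) (ha : ∀ i, w i ≠ a)
    {x : EuclideanSpace ℝ (Fin m)} (h : orthantLift w a x a ≠ 0) :
    ∃ i, orthantLift w a x (w i) = 0 := by
  rw [orthantLift_apex ha] at h
  obtain ⟨i, hi⟩ := exists_add_depth_eq_zero h
  refine ⟨i, ?_⟩
  rw [← NNReal.coe_eq_zero, coe_orthantLift_apply hw ha, hi]

lemma orthantLift_eq (hw : Function.Injective w) (ha : ∀ i, w i ≠ a)
    {f : V → ℝ≥0} {x : EuclideanSpace ℝ (Fin m)}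
    (hx : ∀ i, x i = f (w i) - f a) (hf : ∀ u, f u ≠ 0 → u = a ∨ ∃ i, w i = u)
    (hb : f a ≠ 0 → ∃ i, f (w i) = 0) : orthantLift w a x = f := by
  have hd : depth x = f a := by
    apply le_antisymm
    · refine Finset.sup_le fun i _ => ?_
      rw [Real.toNNReal_le_iff_le_coe, hx]
      linarith [(f (w i)).coe_nonneg]
    · by_cases h : f a = 0
      · rw [h]
        exact zero_le
      · obtain ⟨i, hi⟩ := hb h
        have := neg_le_depth x i
        rw [hx, hi] at this
        simpa using this
  funext u
  by_cases hu : u = a ∨ ∃ i, w i = u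
  · rcases hu with rfl | ⟨i, rfl⟩
    · rw [orthantLift_apex ha, hd]
    · rw [← NNReal.coe_inj, coe_orthantLift_apply hw ha, hx, hd]
      ring
  · rw [not_imp_comm.1 (hf u) hu]
    push Not at hu
    exact orthantLift_of_notMem _ hu.2 (Ne.symm hu.1)

end

variable [Fintype V]

/-- The boundary of a simplex with `m + 1` vertices is a sphere of dimension `m - 1`. -/
theorem nonempty_homotopyEquiv_boundary {w : Fin m → V} {a : V} (hw : Function.Injective w)
    (ha : ∀ i, w i ≠ a) {D : Finset V → Prop}
    (hD : ∀ σ, D σ ↔ (∀ u ∈ σ, u = a ∨ ∃ i, w i = u) ∧ (a ∈ σ → ∃ i, w i ∉ σ)) :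
    Nonempty (ContinuousMap.HomotopyEquiv (WeightSpace D) (sphereSpace m)) := by
  obtain ⟨e⟩ := nonempty_homotopyEquiv_punctured m
  let L : Punctured m → WeightSpace D := fun x =>
    ⟨orthantLift w a x.1, orthantLift_ne_zero hw ha x.2, by
      rw [hD]
      constructor
      · intro u hu
        by_contra! h
        exact mem_weightSupport.1 hu (orthantLift_of_notMem _ h.2 (Ne.symm h.1))
      · intro h
        obtain ⟨i, hi⟩ := exists_orthantLift_eq_zero hw ha (mem_weightSupport.1 h)
        exact ⟨i, by simpa [mem_weightSupport] using hi⟩⟩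
  have hne : ∀ f : WeightSpace D,
      (WithLp.toLp 2 fun i => (f.1 (w i) : ℝ) - f.1 a : EuclideanSpace ℝ (Fin m)) ≠ 0 := by
    intro f h
    obtain ⟨h1, h2⟩ := (hD _).1 f.2.2
    have h3 : ∀ i, f.1 (w i) = f.1 a := fun i => by
      have := congrArg (fun y : EuclideanSpace ℝ (Fin m) => y i) h
      simpa [sub_eq_zero] using this
    simp only [mem_weightSupport, not_not, h3] at h1 h2
    have h4 : f.1 a = 0 := by
      by_contra h5
      obtain ⟨i, hi⟩ := h2 h5
      exact h5 hi
    apply f.2.1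
    funext u
    by_contra hu
    rcases h1 u hu with rfl | ⟨i, rfl⟩
    · exact hu h4
    · exact hu ((h3 i).trans h4)
  let h : WeightSpace D ≃ₜ Punctured m :=
    { toFun := fun f => ⟨_, hne f⟩
      invFun := L
      left_inv := by
        intro f
        obtain ⟨h1, h2⟩ := (hD _).1 f.2.2
        simp only [mem_weightSupport, not_not] at h1 h2
        exact Subtype.ext (orthantLift_eq hw ha (fun i => rfl) h1 h2)
      right_inv := by
        intro x
        apply Subtype.ext
        ext i
        simp [L, coe_orthantLift_apply hw ha, orthantLift_apex ha]
      continuous_toFun := by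
        refine Continuous.subtype_mk ?_ _
        have : ∀ u, Continuous fun f : WeightSpace D => (f.1 u : ℝ) := fun u =>
          NNReal.continuous_coe.comp ((continuous_apply u).comp continuous_subtype_val)
        refine (PiLp.continuous_toLp 2 _).comp (continuous_pi fun i => ?_)
        exact (this _).sub (this _)
      continuous_invFun :=
        ((continuous_orthantLift w a).comp continuous_subtype_val).subtype_mk _ }
  exact ⟨h.toHomotopyEquiv.trans e⟩

/-- Two boundaries of simplices glued along a common facet form a wedge of two spheres. -/
theorem nonempty_homotopyEquiv_boundary_union (hm : 0 < m) {w : Fin m → V} {a : Fin 2 → V}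
    (hw : Function.Injective w) (ha : ∀ k i, w i ≠ a k) (hne : a 0 ≠ a 1) {D : Finset V → Prop}
    (hD : ∀ σ, D σ ↔ (∀ u ∈ σ, (∃ k, u = a k) ∨ ∃ i, w i = u) ∧ (a 0 ∉ σ ∨ a 1 ∉ σ) ∧
      ∀ k, a k ∈ σ → ∃ i, w i ∉ σ) :
    Nonempty (ContinuousMap.HomotopyEquiv (WeightSpace D)
      (Wedge (Fin 2) (sphereSpace m) (spherePt m hm))) := by
  have cval : ∀ u, Continuous fun f : WeightSpace D => f.1 u := fun u =>
    (continuous_apply u).comp continuous_subtype_val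
  have hother : ∀ k k', k ≠ k' → a k ≠ a k' := by
    intro k k' h
    fin_cases k <;> fin_cases k' <;> first | exact absurd rfl h | exact hne | exact hne.symm
  have hlift0 : ∀ k k' (x : EuclideanSpace ℝ (Fin m)), k ≠ k' →
      orthantLift w (a k) x (a k') = 0 := fun k k' x h =>
    orthantLift_of_notMem x (ha k') (hother k k' h)
  have hsum : ∀ k (x : EuclideanSpace ℝ (Fin m)),
      orthantLift w (a k) x (a 0) + orthantLift w (a k) x (a 1) = depth x := by
    intro k x
    fin_cases k
    · simp [hlift0 0 1 x (by simp), orthantLift_apex (ha 0)]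
    · simp [hlift0 1 0 x (by simp), orthantLift_apex (ha 1)]
  let l : Fin 2 → C(Punctured m, WeightSpace D) := fun k =>
    ⟨fun x => ⟨orthantLift w (a k) x.1, orthantLift_ne_zero hw (ha k) x.2, by
      simp only [hD, mem_weightSupport, not_not]
      refine ⟨?_, ?_, ?_⟩
      · intro u hu
        by_contra! h
        exact hu (orthantLift_of_notMem _ h.2 (h.1 k).symm)
      · fin_cases k
        · exact Or.inr (hlift0 0 1 _ (by simp))
        · exact Or.inl (hlift0 1 0 _ (by simp))
      · intro k' hk'
        by_cases h : k = k'
        · subst h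
          exact exists_orthantLift_eq_zero hw (ha k) hk'
        · exact absurd (hlift0 k k' _ h) hk'⟩,
      ((continuous_orthantLift w (a k)).comp continuous_subtype_val).subtype_mk _⟩
  let side : Fin 2 → Set (WeightSpace D) := fun k => {f | f.1 (a (1 - k)) = 0}
  have hside : ∀ k, ∀ f ∈ side k, f.1 (a 0) + f.1 (a 1) = f.1 (a k) := by
    intro k f hf
    fin_cases k
    · have : f.1 (a 1) = 0 := hf
      simp [this]
    · have : f.1 (a 0) = 0 := hf
      simp [this]
  have hcover : ∀ f : WeightSpace D, f ∈ side 0 ∨ f ∈ side 1 := by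
    intro f
    have := ((hD _).1 f.2.2).2.1
    simp only [mem_weightSupport, not_not] at this
    exact this.symm
  have hsupp : ∀ k, ∀ f ∈ side k, ∀ u, f.1 u ≠ 0 → u = a k ∨ ∃ i, w i = u := by
    intro k f hf u hu
    rcases ((hD _).1 f.2.2).1 u (mem_weightSupport.2 hu) with ⟨k', rfl⟩ | h
    · left
      by_contra hk
      have : k' = 1 - k := by
        have : k' ≠ k := fun h => hk (by rw [h])
        omega
      rw [this] at hu
      exact hu hf
    · exact Or.inr h
  have hbd : ∀ (f : WeightSpace D) k, f.1 (a k) ≠ 0 → ∃ i, f.1 (w i) = 0 := by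
    intro f k hk
    have := ((hD _).1 f.2.2).2.2 k (mem_weightSupport.2 hk)
    simpa only [mem_weightSupport, not_not] using this
  let coords : WeightSpace D → EuclideanSpace ℝ (Fin m) := fun f =>
    WithLp.toLp 2 fun i => (f.1 (w i) : ℝ) - ((f.1 (a 0) + f.1 (a 1) : ℝ≥0) : ℝ)
  have hlc : ∀ k, ∀ f ∈ side k, orthantLift w (a k) (coords f) = f.1 := by
    intro k f hf
    refine orthantLift_eq hw (ha k) (fun i => ?_) (hsupp k f hf) (hbd f k)
    simp only [coords, hside k f hf]
  have hcne : ∀ f, coords f ≠ 0 := by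
    intro f h
    have : ∃ k, f ∈ side k := (hcover f).elim (fun h => ⟨0, h⟩) fun h => ⟨1, h⟩
    obtain ⟨k, hk⟩ := this
    apply f.2.1
    rw [← hlc k f hk, h]
    funext u
    simp [orthantLift, depth]
  let ρ : C(WeightSpace D, Punctured m) := ⟨fun f => ⟨coords f, hcne f⟩, by
    refine Continuous.subtype_mk ((PiLp.continuous_toLp 2 _).comp (continuous_pi fun i => ?_)) _
    exact (NNReal.continuous_coe.comp (cval _)).sub
      (NNReal.continuous_coe.comp ((cval _).add (cval _)))⟩
  obtain ⟨p, j, H, K, hp, hj, hH, hK⟩ := exists_collapse_orthant m hm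
  refine nonempty_homotopyEquiv_wedge {x : Punctured m | ∀ i, 0 ≤ x.1 i} l ρ side ?_ ?_ ?_ ?_ ?_ ?_
    ?_ p j hp hj H hH K hK
  · exact fun k => isClosed_eq (cval _) continuous_const
  · exact Set.eq_univ_of_forall hcover
  · intro k x
    refine hlift0 _ _ _ ?_
    fin_cases k <;> simp
  · exact fun k f hf => Subtype.ext (hlc k f hf)
  · intro k x
    apply Subtype.ext
    ext i
    simp only [ρ, l, coords, ContinuousMap.coe_mk, hsum, coe_orthantLift_apply hw (ha k)]
    ring
  · rintro f ⟨h0, h1⟩ i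
    have h0' : f.1 (a 1) = 0 := h0
    have h1' : f.1 (a 0) = 0 := h1
    simp [ρ, coords, h0', h1']
  · intro x hx
    apply Subtype.ext
    funext u
    simp [l, orthantLift, depth_eq_zero hx]

end Models

section Cycle

/-- Replacing a path `a, b, c, d, e` by the edge `a, e` and isolating `b` and `d` does not change
the homotopy type. -/
theorem nonempty_homotopyEquiv_contract_path {V : Type*} [Fintype V] [DecidableEq V]
    {a b c d e : V} (hbc : b ≠ c) (hbd : b ≠ d) (hcd : c ≠ d)
    (ha : a ∉ ({b, c, d} : Finset V)) (he : e ∉ ({b, c, d} : Finset V))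
    {ψ Z : Finset V → Prop} (hψ : ∀ σ τ, σ ⊆ τ → ψ σ → ψ τ) (hZ : ∀ σ τ, σ ⊆ τ → Z τ → Z σ)
    (hψi : ∀ v ∈ ({b, c, d} : Finset V), ∀ σ, ψ (insert v σ) ↔ ψ σ)
    (hZi : ∀ v ∈ ({b, c, d} : Finset V), ∀ σ, Z (insert v σ) ↔ Z σ) (hZ0 : Z ∅)
    {D E : Finset V → Prop}
    (hE : ∀ σ, E σ ↔ Z σ ∧ ¬(ψ σ ∧ (a ∈ σ ∨ b ∈ σ) ∧ (b ∈ σ ∨ c ∈ σ) ∧ (c ∈ σ ∨ d ∈ σ) ∧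
      (d ∈ σ ∨ e ∈ σ)))
    (hD : ∀ σ, D σ ↔ (Z σ ∧ c ∉ σ) ∧ ¬(ψ σ ∧ (a ∈ σ ∨ e ∈ σ) ∧ b ∈ σ ∧ d ∈ σ)) :
    Nonempty (ContinuousMap.HomotopyEquiv (WeightSpace E) (WeightSpace D)) := by
  simp only [Finset.mem_insert, Finset.mem_singleton, not_or] at ha he
  have hψb := hψi b (by simp)
  have hψc := hψi c (by simp)
  have hψd := hψi d (by simp)
  have hZb := hZi b (by simp)
  have hZc := hZi c (by simp)
  have hZd := hZi d (by simp)
  obtain ⟨hab, hac, had⟩ := ha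
  obtain ⟨heb, hec, hed⟩ := he
  let T : Finset V → Prop := fun σ => Z σ ∧ ¬(ψ σ ∧ (c ∈ σ ∨ (a ∈ σ ∨ e ∈ σ) ∧ b ∈ σ ∧ d ∈ σ) ∧
    (a ∈ σ ∧ e ∈ σ ∨ a ∈ σ ∧ d ∈ σ ∨ b ∈ σ ∧ e ∈ σ))
  let M : Finset V → Prop := fun σ => Z σ ∧ ¬(ψ σ ∧ (c ∈ σ ∨ (a ∈ σ ∨ e ∈ σ) ∧ b ∈ σ ∧ d ∈ σ) ∧
    (a ∈ σ ∨ b ∈ σ ∧ e ∈ σ))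
  have hEdown : ∀ σ τ, σ ⊆ τ → E τ → E σ := by
    intro σ τ h
    have := hψ _ _ h
    have := hZ _ _ h
    have := @h a; have := @h b; have := @h c; have := @h d; have := @h e
    rw [hE, hE]
    grind
  have hTdown : ∀ σ τ, σ ⊆ τ → T τ → T σ := by
    intro σ τ h
    have := hψ _ _ h
    have := hZ _ _ h
    have := @h a; have := @h b; have := @h c; have := @h d; have := @h e
    simp only [T]
    grind
  have hMdown : ∀ σ τ, σ ⊆ τ → M τ → M σ := by
    intro σ τ h
    have := hψ _ _ h
    have := hZ _ _ h
    have := @h a; have := @h b; have := @h c; have := @h d; have := @h e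
    simp only [M]
    grind
  have hDdown : ∀ σ τ, σ ⊆ τ → D τ → D σ := by
    intro σ τ h
    have := hψ _ _ h
    have := hZ _ _ h
    have := @h a; have := @h b; have := @h c; have := @h d; have := @h e
    rw [hD, hD]
    grind
  obtain ⟨f⟩ : Nonempty (ContinuousMap.HomotopyEquiv (WeightSpace T) (WeightSpace E)) := by
    refine nonempty_homotopyEquiv_of_toggle c hEdown hTdown (by simp [hE, hZ0]) ?_ ?_ ?_ <;>
    · intro σ
      simp only [hE, T, hψc, hZc, Finset.mem_insert, hbc, hcd.symm, hac, hec]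
      grind
  obtain ⟨g⟩ : Nonempty (ContinuousMap.HomotopyEquiv (WeightSpace T) (WeightSpace M)) := by
    refine nonempty_homotopyEquiv_of_toggle b hMdown hTdown (by simp [M, hZ0]) ?_ ?_ ?_ <;>
    · intro σ
      simp only [M, T, hψb, hZb, Finset.mem_insert, hbc.symm, hbd.symm, hab, heb]
      grind
  obtain ⟨h⟩ : Nonempty (ContinuousMap.HomotopyEquiv (WeightSpace M) (WeightSpace D)) := by
    refine nonempty_homotopyEquiv_of_toggle d hDdown hMdown (by simp [hD, hZ0]) ?_ ?_ ?_ <;>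
    · intro σ
      simp only [M, hD, hψd, hZd, Finset.mem_insert, hbd, hcd, had, hed]
      grind
  exact ⟨f.symm.trans (g.trans h)⟩

variable {n : ℕ}

lemma natCast_zmod_inj {i j : ℕ} (hi : i < n) (hj : j < n) : (i : ZMod n) = j ↔ i = j := by
  rw [ZMod.natCast_eq_natCast_iff', Nat.mod_eq_of_lt hi, Nat.mod_eq_of_lt hj]

/-- Every edge of the path `0, …, r - 1` has an endpoint in `σ`. -/
def CoversPath (r : ℕ) (σ : Finset (ZMod n)) : Prop :=
  ∀ i, i + 1 < r → (i : ZMod n) ∈ σ ∨ ((i + 1 : ℕ) : ZMod n) ∈ σ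

/-- Among the vertices from `r` on, grouped in triples, `σ` contains the outer ones. -/
def ContainsOuter (r : ℕ) (σ : Finset (ZMod n)) : Prop :=
  ∀ i < n, r ≤ i → i % 3 ≠ (n + 1) % 3 → (i : ZMod n) ∈ σ

/-- Among the vertices from `r` on, grouped in triples, `σ` avoids the middle ones. -/
def AvoidsMiddle (r : ℕ) (σ : Finset (ZMod n)) : Prop :=
  ∀ i < n, r ≤ i → i % 3 = (n + 1) % 3 → (i : ZMod n) ∉ σ

/-- The complex obtained from the theta complex of the `n`-cycle by shortening the cycle to
length `r`. -/
def shortened (n r : ℕ) (σ : Finset (ZMod n)) : Prop :=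
  AvoidsMiddle r σ ∧
    ¬(CoversPath r σ ∧ (((r - 1 : ℕ) : ZMod n) ∈ σ ∨ ((0 : ℕ) : ZMod n) ∈ σ) ∧ ContainsOuter r σ)

lemma shortened_anti {r : ℕ} {σ τ : Finset (ZMod n)} (h : σ ⊆ τ) (hτ : shortened n r τ) :
    shortened n r σ := by
  refine ⟨fun i hi hr hm hs => hτ.1 i hi hr hm (h hs), fun hc => hτ.2 ⟨fun i hi => ?_, ?_, ?_⟩⟩
  · exact (hc.1 i hi).imp (@h _) (@h _)
  · exact hc.2.1.imp (@h _) (@h _)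
  · exact fun i hi hr hm => h (hc.2.2 i hi hr hm)

lemma shortened_self [NeZero n] (σ : Finset (ZMod n)) :
    shortened n n σ ↔ ∃ i : ZMod n, i ∉ σ ∧ i + 1 ∉ σ := by
  have hn : 0 < n := Nat.pos_of_ne_zero (NeZero.ne n)
  have h1 : AvoidsMiddle n σ := fun i hi hr => by omega
  have h2 : ContainsOuter n σ := fun i hi hr => by omega
  have h3 : (((n - 1 : ℕ) : ZMod n)) + 1 = ((0 : ℕ) : ZMod n) := by
    rw [← Nat.cast_succ, Nat.succ_eq_add_one, Nat.sub_add_cancel hn]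
    simp
  simp only [shortened, h1, h2, true_and, and_true]
  constructor
  · intro h
    by_contra! hc
    refine h ⟨fun i _ => ?_, ?_⟩
    · by_contra! hi
      refine hi.2 ?_
      simpa using hc _ hi.1
    · by_contra! hi
      exact hi.2 (h3 ▸ hc _ hi.1)
  · rintro ⟨i, hi, hi'⟩ ⟨hp, hl⟩
    rw [← ZMod.natCast_zmod_val i] at hi hi'
    have hlt := ZMod.val_lt i
    by_cases h : i.val + 1 < n
    · rcases hp _ h with h' | h'
      · exact hi h'
      · exact hi' (by simpa using h')
    · have : i.val = n - 1 := by omega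
      rw [this] at hi hi'
      rw [h3] at hi'
      exact hl.elim hi hi'

lemma coversPath_add_three {r : ℕ} (hr : 1 ≤ r) (σ : Finset (ZMod n)) :
    CoversPath (r + 3) σ ↔ CoversPath r σ ∧
      (((r - 1 : ℕ) : ZMod n) ∈ σ ∨ (r : ZMod n) ∈ σ) ∧
      ((r : ZMod n) ∈ σ ∨ ((r + 1 : ℕ) : ZMod n) ∈ σ) ∧
      (((r + 1 : ℕ) : ZMod n) ∈ σ ∨ ((r + 2 : ℕ) : ZMod n) ∈ σ) := by
  constructor
  · intro h
    refine ⟨fun i hi => h i (by omega), ?_, h r (by omega), h (r + 1) (by omega)⟩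
    have := h (r - 1) (by omega)
    rwa [Nat.sub_add_cancel hr] at this
  · rintro ⟨h, h1, h2, h3⟩ i hi
    by_cases hi' : i + 1 < r
    · exact h i hi'
    · have : i = r - 1 ∨ i = r ∨ i = r + 1 := by omega
      rcases this with rfl | rfl | rfl
      · rwa [Nat.sub_add_cancel hr]
      · exact h2
      · exact h3

lemma containsOuter_iff {r : ℕ} (hr : r % 3 = n % 3) (hrn : r + 3 ≤ n) (σ : Finset (ZMod n)) :
    ContainsOuter r σ ↔ ContainsOuter (r + 3) σ ∧ (r : ZMod n) ∈ σ ∧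
      ((r + 2 : ℕ) : ZMod n) ∈ σ := by
  constructor
  · intro h
    exact ⟨fun i hi hi' => h i hi (by omega), h r (by omega) le_rfl (by omega),
      h (r + 2) (by omega) (by omega) (by omega)⟩
  · rintro ⟨h, h1, h2⟩ i hi hi' hm
    by_cases hi'' : r + 3 ≤ i
    · exact h i hi hi'' hm
    · have : i = r ∨ i = r + 2 := by omega
      rcases this with rfl | rfl
      · exact h1
      · exact h2

lemma avoidsMiddle_iff {r : ℕ} (hr : r % 3 = n % 3) (hrn : r + 3 ≤ n) (σ : Finset (ZMod n)) :
    AvoidsMiddle r σ ↔ AvoidsMiddle (r + 3) σ ∧ ((r + 1 : ℕ) : ZMod n) ∉ σ := by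
  constructor
  · intro h
    exact ⟨fun i hi hi' => h i hi (by omega), h (r + 1) (by omega) (by omega) (by omega)⟩
  · rintro ⟨h, h1⟩ i hi hi' hm
    by_cases hi'' : r + 3 ≤ i
    · exact h i hi hi'' hm
    · have : i = r + 1 := by omega
      rwa [this]

theorem nonempty_homotopyEquiv_shortened_step [NeZero n] {r : ℕ} (hr1 : 1 ≤ r)
    (hr : r % 3 = n % 3) (hrn : r + 3 ≤ n) :
    Nonempty (ContinuousMap.HomotopyEquiv (WeightSpace (shortened n (r + 3)))
      (WeightSpace (shortened n r))) := by
  have hne : ∀ i j : ℕ, i < n → j < n → i ≠ j → (i : ZMod n) ≠ j := fun i j hi hj h =>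
    (natCast_zmod_inj hi hj).not.2 h
  have hins : ∀ v ∈ ({(r : ZMod n), ((r + 1 : ℕ) : ZMod n), ((r + 2 : ℕ) : ZMod n)} :
      Finset (ZMod n)), ∀ σ : Finset (ZMod n), ∀ i < n, (i < r ∨ r + 3 ≤ i) →
      ((i : ZMod n) ∈ insert v σ ↔ (i : ZMod n) ∈ σ) := by
    intro v hv σ i hi hir
    have : (i : ZMod n) ≠ v := by
      simp only [Finset.mem_insert, Finset.mem_singleton] at hv
      rcases hv with rfl | rfl | rfl <;> exact hne _ _ hi (by omega) (by omega)
    simp [this]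
  refine nonempty_homotopyEquiv_contract_path (a := ((r - 1 : ℕ) : ZMod n)) (b := (r : ZMod n))
    (c := ((r + 1 : ℕ) : ZMod n)) (d := ((r + 2 : ℕ) : ZMod n)) (e := ((0 : ℕ) : ZMod n))
    (ψ := fun σ => CoversPath r σ ∧ ContainsOuter (r + 3) σ) (Z := AvoidsMiddle (r + 3))
    (hne _ _ (by omega) (by omega) (by omega)) (hne _ _ (by omega) (by omega) (by omega))
    (hne _ _ (by omega) (by omega) (by omega)) ?_ ?_ ?_ ?_ ?_ ?_ ?_ ?_ ?_
  · simp only [Finset.mem_insert, Finset.mem_singleton, not_or]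
    refine ⟨?_, ?_, ?_⟩ <;> exact hne _ _ (by omega) (by omega) (by omega)
  · simp only [Finset.mem_insert, Finset.mem_singleton, not_or]
    refine ⟨?_, ?_, ?_⟩ <;> exact hne _ _ (by omega) (by omega) (by omega)
  · exact fun σ τ h hc => ⟨fun i hi => (hc.1 i hi).imp (@h _) (@h _),
      fun i hi hi' hm => h (hc.2 i hi hi' hm)⟩
  · exact fun σ τ h hc i hi hi' hm hs => hc i hi hi' hm (h hs)
  · intro v hv σ
    refine and_congr (forall_congr' fun i => forall_congr' fun hi => ?_)
      (forall_congr' fun i => forall_congr' fun hi => forall_congr' fun hi' => ?_)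
    · rw [hins v hv σ i (by omega) (by omega), hins v hv σ (i + 1) (by omega) (by omega)]
    · rw [hins v hv σ i hi (by omega)]
  · intro v hv σ
    refine forall_congr' fun i => forall_congr' fun hi => forall_congr' fun hi' => ?_
    rw [hins v hv σ i hi (by omega)]
  · exact fun i _ _ _ => by simp
  · intro σ
    simp only [shortened, coversPath_add_three hr1, show r + 3 - 1 = r + 2 by omega]
    tauto
  · intro σ
    simp only [shortened, containsOuter_iff hr hrn, avoidsMiddle_iff hr hrn]
    tauto

theorem nonempty_homotopyEquiv_shortened [NeZero n] {r : ℕ} (hr : 1 ≤ r) (j : ℕ)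
    (hn : n = r + 3 * j) :
    Nonempty (ContinuousMap.HomotopyEquiv (WeightSpace (shortened n n))
      (WeightSpace (shortened n r))) := by
  induction j generalizing r with
  | zero =>
    obtain rfl : n = r := by omega
    exact ⟨ContinuousMap.HomotopyEquiv.refl _⟩
  | succ j ih =>
    obtain ⟨f⟩ := ih (r := r + 3) (by omega) (by omega)
    obtain ⟨g⟩ := nonempty_homotopyEquiv_shortened_step (n := n) hr (by omega) (by omega)
    exact ⟨f.trans g⟩

theorem nonempty_homotopyEquiv_theta_shortened [NeZero n] {r : ℕ} (hr : 1 ≤ r) (j : ℕ)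
    (hn : n = r + 3 * j) :
    Nonempty (ContinuousMap.HomotopyEquiv (geomReal (thetaComplex (cycleEdges n)))
      (WeightSpace (shortened n r))) := by
  obtain ⟨f⟩ := nonempty_homotopyEquiv_shortened hr j hn
  obtain ⟨g⟩ := nonempty_homotopyEquiv_geomReal (K := thetaComplex (cycleEdges n))
    (D := shortened n n) (fun σ τ => shortened_anti) fun σ => by
      rw [shortened_self]
      refine and_congr_right fun _ => ⟨?_, ?_⟩
      · rintro ⟨_, ⟨i, rfl⟩, h⟩
        exact ⟨i, fun hi => h _ hi (by simp), fun hi => h _ hi (by simp)⟩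
      · rintro ⟨i, h, h'⟩
        refine ⟨_, ⟨i, rfl⟩, fun v hv hm => ?_⟩
        rcases hm with rfl | rfl
        · exact h hv
        · exact h' hv
  exact ⟨g.trans f⟩

/-- The outer vertices of the triples starting at `r`, in increasing order. -/
def outer (r s : ℕ) : ℕ := r + 3 * (s / 2) + 2 * (s % 2)

lemma containsOuter_iff_forall {r j : ℕ} (hn : n = r + 3 * j) (σ : Finset (ZMod n)) :
    ContainsOuter r σ ↔ ∀ s < 2 * j, (outer r s : ZMod n) ∈ σ := by
  constructor
  · intro h s hs
    exact h _ (by unfold outer; omega) (by unfold outer; omega) (by unfold outer; omega)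
  · intro h i hi hi' hm
    have := h (2 * ((i - r) / 3) + (i - r) % 3 / 2) (by omega)
    rwa [show outer r (2 * ((i - r) / 3) + (i - r) % 3 / 2) = i by unfold outer; omega] at this

lemma avoidsMiddle_iff_forall [NeZero n] {r j : ℕ} (hn : n = r + 3 * j) (σ : Finset (ZMod n)) :
    AvoidsMiddle r σ ↔ ∀ u ∈ σ, (∃ i < r, u = (i : ZMod n)) ∨
      ∃ s < 2 * j, (outer r s : ZMod n) = u := by
  constructor
  · intro h u hu
    rw [← ZMod.natCast_zmod_val u] at hu ⊢
    have hlt := ZMod.val_lt u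
    by_cases hr : u.val < r
    · exact Or.inl ⟨_, hr, rfl⟩
    · right
      have hm : u.val % 3 ≠ (n + 1) % 3 := fun hm => h _ hlt (by omega) hm hu
      refine ⟨2 * ((u.val - r) / 3) + (u.val - r) % 3 / 2, by omega, ?_⟩
      congr 1
      unfold outer
      omega
  · intro h i hi hi' hm hs
    rcases h _ hs with ⟨i', hi1, e⟩ | ⟨s, hs, e⟩
    · rw [natCast_zmod_inj hi (by omega)] at e
      omega
    · rw [natCast_zmod_inj (by unfold outer; omega) hi] at e
      unfold outer at e
      omega

lemma outer_injective {r j : ℕ} (hn : n = r + 3 * j) :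
    Function.Injective fun s : Fin (2 * j) => (outer r s : ZMod n) := by
  intro s s' h
  have h1 := s.2
  have h2 := s'.2
  rw [natCast_zmod_inj (by unfold outer; omega) (by unfold outer; omega)] at h
  unfold outer at h
  ext
  omega

lemma outer_ne {r j : ℕ} (hn : n = r + 3 * j) {i s : ℕ} (hi : i < r) (hs : s < 2 * j) :
    (outer r s : ZMod n) ≠ i := by
  rw [Ne, natCast_zmod_inj (by unfold outer; omega) (by omega)]
  unfold outer
  omega

theorem nonempty_homotopyEquiv_shortened_one [NeZero n] {k : ℕ} (hn : n = 1 + 3 * k) :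
    Nonempty (ContinuousMap.HomotopyEquiv (WeightSpace (shortened n 1))
      (sphereSpace (2 * k))) := by
  refine nonempty_homotopyEquiv_boundary (a := ((0 : ℕ) : ZMod n)) (outer_injective hn)
    (fun s => outer_ne hn one_pos s.2) fun σ => ?_
  have h : CoversPath 1 σ := fun i hi => by omega
  simp only [shortened, h, containsOuter_iff_forall hn, avoidsMiddle_iff_forall hn, Fin.exists_iff,
    Nat.lt_one_iff, exists_eq_left, exists_prop]
  push Not
  simp

theorem nonempty_homotopyEquiv_shortened_two [NeZero n] {k : ℕ} (hn : n = 2 + 3 * k) :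
    Nonempty (ContinuousMap.HomotopyEquiv (WeightSpace (shortened n 2))
      (sphereSpace (2 * k))) := by
  have h01 : ((0 : ℕ) : ZMod n) ≠ ((1 : ℕ) : ZMod n) :=
    (natCast_zmod_inj (by omega) (by omega)).not.2 (by omega)
  let D : Finset (ZMod n) → Prop := fun σ =>
    (∀ u ∈ σ, u = ((0 : ℕ) : ZMod n) ∨ ∃ s : Fin (2 * k), (outer 2 s : ZMod n) = u) ∧
      (((0 : ℕ) : ZMod n) ∈ σ → ∃ s : Fin (2 * k), (outer 2 s : ZMod n) ∉ σ)
  have hS : ∀ σ, shortened n 2 σ ↔ (∀ u ∈ σ, (u = ((0 : ℕ) : ZMod n) ∨ u = ((1 : ℕ) : ZMod n)) ∨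
      ∃ s : Fin (2 * k), (outer 2 s : ZMod n) = u) ∧
      ((((0 : ℕ) : ZMod n) ∈ σ ∨ ((1 : ℕ) : ZMod n) ∈ σ) →
        ∃ s : Fin (2 * k), (outer 2 s : ZMod n) ∉ σ) := by
    intro σ
    have h : CoversPath 2 σ ↔ ((0 : ℕ) : ZMod n) ∈ σ ∨ ((1 : ℕ) : ZMod n) ∈ σ := by
      constructor
      · exact fun h => h 0 (by omega)
      · intro h i hi
        obtain rfl : i = 0 := by omega
        exact h
    have h2 : ∀ u : ZMod n, (∃ i : ℕ, i < 2 ∧ u = (i : ZMod n)) ↔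
        (u = ((0 : ℕ) : ZMod n) ∨ u = ((1 : ℕ) : ZMod n)) := by
      intro u
      constructor
      · rintro ⟨i, hi, rfl⟩
        interval_cases i <;> simp
      · rintro (rfl | rfl)
        · exact ⟨0, by omega, rfl⟩
        · exact ⟨1, by omega, rfl⟩
    simp only [shortened, h, containsOuter_iff_forall hn, avoidsMiddle_iff_forall hn,
      Fin.exists_iff, h2, exists_prop]
    refine and_congr Iff.rfl ?_
    push Not
    tauto
  have ho : ∀ (s : Fin (2 * k)) (i : ℕ), i < 2 → (outer 2 s : ZMod n) ≠ i := fun s i hi =>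
    outer_ne hn hi s.2
  have hDdown : ∀ σ τ, σ ⊆ τ → D τ → D σ := fun σ τ h hτ =>
    ⟨fun u hu => hτ.1 u (h hu), fun h0 => (hτ.2 (h h0)).imp fun s hs hs' => hs (h hs')⟩
  obtain ⟨f⟩ : Nonempty (ContinuousMap.HomotopyEquiv (WeightSpace (shortened n 2))
      (WeightSpace D)) := by
    refine nonempty_homotopyEquiv_of_toggle ((0 : ℕ) : ZMod n) hDdown
      (fun σ τ => shortened_anti) (by simp [D]) ?_ ?_ ?_
    · rintro σ ⟨h1, h2⟩
      rw [hS]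
      refine ⟨fun u hu => (h1 u hu).imp_left Or.inl, ?_⟩
      rintro (h | h)
      · exact h2 h
      · rcases h1 _ h with h | ⟨s, hs⟩
        · exact absurd h.symm h01
        · exact absurd hs (ho s 1 (by omega))
    · intro σ hσ hnD
      rw [hS] at hσ ⊢
      have : ∃ s : Fin (2 * k), (outer 2 s : ZMod n) ∉ σ := by
        by_contra hc
        apply hnD
        refine ⟨fun u hu => (hσ.1 u hu).imp_left ?_, fun h0 => hσ.2 (Or.inl h0)⟩
        rintro (h | rfl)
        · exact h
        · exact absurd (hσ.2 (Or.inr hu)) hc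
      obtain ⟨s, hs⟩ := this
      refine ⟨fun u hu => ?_, fun _ => ⟨s, ?_⟩⟩
      · rcases Finset.mem_insert.1 hu with rfl | hu
        · exact Or.inl (Or.inl rfl)
        · exact hσ.1 u hu
      · rw [Finset.mem_insert, not_or]
        exact ⟨ho s 0 (by omega), hs⟩
    · intro σ hD hσ
      rw [hS] at hσ
      refine ⟨fun u hu => ?_, fun h => hσ.2 (Or.inl h)⟩
      rcases Finset.mem_insert.1 hu with rfl | hu
      · exact Or.inl rfl
      · exact hD.1 u hu
  obtain ⟨g⟩ := nonempty_homotopyEquiv_boundary (D := D) (a := ((0 : ℕ) : ZMod n))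
    (outer_injective hn) (fun s => outer_ne hn two_pos s.2) fun σ => Iff.rfl
  exact ⟨f.trans g⟩

theorem nonempty_homotopyEquiv_shortened_three [NeZero n] {j : ℕ} (hn : n = 3 + 3 * j) :
    Nonempty (ContinuousMap.HomotopyEquiv (WeightSpace (shortened n 3))
      (Wedge (Fin 2) (sphereSpace (2 * j + 1)) (spherePt _ (Nat.succ_pos _)))) := by
  have hne : ∀ i i' : ℕ, i < 3 → i' < 3 → i ≠ i' → (i : ZMod n) ≠ i' := fun i i' hi hi' h =>
    (natCast_zmod_inj (by omega) (by omega)).not.2 h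
  have h01 := hne 0 1 (by omega) (by omega) (by omega)
  have h12 := hne 1 2 (by omega) (by omega) (by omega)
  have h02 := hne 0 2 (by omega) (by omega) (by omega)
  have hcov : ∀ σ : Finset (ZMod n), CoversPath 3 σ ↔
      (((0 : ℕ) : ZMod n) ∈ σ ∨ ((1 : ℕ) : ZMod n) ∈ σ) ∧
      (((1 : ℕ) : ZMod n) ∈ σ ∨ ((2 : ℕ) : ZMod n) ∈ σ) := by
    intro σ
    constructor
    · exact fun h => ⟨h 0 (by omega), h 1 (by omega)⟩
    · rintro ⟨h, h'⟩ i hi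
      have : i = 0 ∨ i = 1 := by omega
      rcases this with rfl | rfl
      · exact h
      · exact h'
  let D : Finset (ZMod n) → Prop := fun σ =>
    shortened n 3 σ ∧ (((0 : ℕ) : ZMod n) ∉ σ ∨ ((2 : ℕ) : ZMod n) ∉ σ)
  have hins : ∀ σ : Finset (ZMod n), ∀ i < n, i ≠ 1 →
      ((i : ZMod n) ∈ insert ((1 : ℕ) : ZMod n) σ ↔ (i : ZMod n) ∈ σ) := by
    intro σ i hi h
    rw [Finset.mem_insert, natCast_zmod_inj hi (by omega)]
    grind
  have houter : ∀ σ : Finset (ZMod n), ContainsOuter 3 (insert ((1 : ℕ) : ZMod n) σ) ↔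
      ContainsOuter 3 σ := by
    intro σ
    refine forall_congr' fun i => forall_congr' fun hi => forall_congr' fun hi' => ?_
    rw [hins σ i hi (by omega)]
  have hmiddle : ∀ σ : Finset (ZMod n), AvoidsMiddle 3 (insert ((1 : ℕ) : ZMod n) σ) ↔
      AvoidsMiddle 3 σ := by
    intro σ
    refine forall_congr' fun i => forall_congr' fun hi => forall_congr' fun hi' => ?_
    rw [hins σ i hi (by omega)]
  obtain ⟨f⟩ : Nonempty (ContinuousMap.HomotopyEquiv (WeightSpace (shortened n 3))
      (WeightSpace D)) := by
    refine nonempty_homotopyEquiv_of_toggle ((1 : ℕ) : ZMod n)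
      (fun σ τ h hτ => ⟨shortened_anti h hτ.1, hτ.2.imp (fun h' h0 => h' (h h0))
        fun h' h0 => h' (h h0)⟩) (fun σ τ => shortened_anti) ?_ (fun σ h => h.1) ?_ ?_
    · refine ⟨⟨fun i _ _ _ => by simp, fun h => ?_⟩, by simp⟩
      simpa using h.2.1
    · intro σ
      simp only [D, shortened, hcov, houter, hmiddle, Finset.mem_insert, h01, h12.symm]
      grind
    · intro σ
      simp only [D, Finset.mem_insert, h01, h12.symm]
      grind
  let w : Fin (2 * j + 1) → ZMod n := Fin.cons ((1 : ℕ) : ZMod n) fun s => (outer 3 s : ZMod n)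
  have hw : Function.Injective w := by
    rw [Fin.cons_injective_iff]
    refine ⟨?_, outer_injective hn⟩
    rintro ⟨s, hs⟩
    exact outer_ne hn (by omega) s.2 hs
  let a : Fin 2 → ZMod n := ![((0 : ℕ) : ZMod n), ((2 : ℕ) : ZMod n)]
  obtain ⟨g⟩ := nonempty_homotopyEquiv_boundary_union (D := D) (a := a) (Nat.succ_pos _) hw
    (by
      intro k s
      fin_cases k
      · refine Fin.cases h01.symm (fun s => outer_ne hn (by omega) s.2) s
      · refine Fin.cases h12 (fun s => outer_ne hn (by omega) s.2) s) h02 (by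
    intro σ
    have h3 : ∀ u : ZMod n, (∃ i : ℕ, i < 3 ∧ u = (i : ZMod n)) ↔
        (u = ((0 : ℕ) : ZMod n) ∨ u = ((1 : ℕ) : ZMod n) ∨ u = ((2 : ℕ) : ZMod n)) := by
      intro u
      constructor
      · rintro ⟨i, hi, rfl⟩
        interval_cases i <;> simp
      · rintro (rfl | rfl | rfl)
        · exact ⟨0, by omega, rfl⟩
        · exact ⟨1, by omega, rfl⟩
        · exact ⟨2, by omega, rfl⟩
    have e1 : ∀ u, ((∃ k, u = a k) ∨ ∃ i, w i = u) ↔ ((u = ((0 : ℕ) : ZMod n) ∨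
        u = ((1 : ℕ) : ZMod n) ∨ u = ((2 : ℕ) : ZMod n)) ∨
        ∃ s < 2 * j, (outer 3 s : ZMod n) = u) := by
      intro u
      rw [Fin.exists_fin_two, Fin.exists_fin_succ]
      simp only [a, w, Fin.cons_zero, Fin.cons_succ, Matrix.cons_val_zero, Matrix.cons_val_one,
        Fin.exists_iff, exists_prop, eq_comm (a := u)]
      grind
    have e2 : (∃ i, w i ∉ σ) ↔ ¬(((1 : ℕ) : ZMod n) ∈ σ ∧ ContainsOuter 3 σ) := by
      rw [Fin.exists_fin_succ, containsOuter_iff_forall hn]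
      simp only [w, Fin.cons_zero, Fin.cons_succ, Fin.exists_iff, exists_prop]
      push Not
      grind
    have e3 : AvoidsMiddle 3 σ ↔ ∀ u ∈ σ, (∃ k, u = a k) ∨ ∃ i, w i = u := by
      simp only [avoidsMiddle_iff_forall hn, e1, h3]
    simp only [← e3, e2, Fin.forall_fin_two]
    simp only [D, shortened, hcov, a, Matrix.cons_val_zero, Matrix.cons_val_one]
    grind)
  exact ⟨f.trans g⟩

end Cycle

/-- For `n ≥ 3`, `Θ(P_n)` is homotopy equivalent to a wedge of
two copies of `S^{2k-2}` if `n = 3k`, and to `S^{2k-1}` if `n = 3k+1` or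
`n = 3k+2`.  (Here `S^{d-1}` is the unit sphere in `ℝ^d`.) -/
theorem theta_cycle_graph (n k : ℕ) (hn : 3 ≤ n) :
    (∀ _ : n = 3 * k, Nonempty (ContinuousMap.HomotopyEquiv
      (↥(geomReal (thetaComplex (cycleEdges n))))
      (Wedge (Fin 2) (↥(sphereSpace (2 * k - 1))) (spherePt _ (by omega))))) ∧
    (n = 3 * k + 1 → Nonempty (ContinuousMap.HomotopyEquiv
      (↥(geomReal (thetaComplex (cycleEdges n)))) (↥(sphereSpace (2 * k))))) ∧
    (n = 3 * k + 2 → Nonempty (ContinuousMap.HomotopyEquiv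
      (↥(geomReal (thetaComplex (cycleEdges n)))) (↥(sphereSpace (2 * k))))) := by
  have : NeZero n := ⟨by omega⟩
  refine ⟨fun h => ?_, fun h => ?_, fun h => ?_⟩
  · obtain ⟨j, rfl⟩ : ∃ j, k = j + 1 := ⟨k - 1, by omega⟩
    obtain ⟨f⟩ := nonempty_homotopyEquiv_theta_shortened (n := n) (r := 3) (by omega) j (by omega)
    obtain ⟨g⟩ := nonempty_homotopyEquiv_shortened_three (n := n) (j := j) (by omega)
    exact ⟨f.trans g⟩
  · obtain ⟨f⟩ := nonempty_homotopyEquiv_theta_shortened (n := n) (r := 1) (by omega) k (by omega)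
    obtain ⟨g⟩ := nonempty_homotopyEquiv_shortened_one (n := n) (k := k) (by omega)
    exact ⟨f.trans g⟩
  · obtain ⟨f⟩ := nonempty_homotopyEquiv_theta_shortened (n := n) (r := 2) (by omega) k (by omega)
    obtain ⟨g⟩ := nonempty_homotopyEquiv_shortened_two (n := n) (k := k) (by omega)
    exact ⟨f.trans g⟩
end

section
/- Θ(Cube(3,1)) is homotopy equivalent to a wedge of three copies of the 4-sphere, S⁴ ∨ S⁴ ∨ S⁴. -/
/-! ### The complement of four rays in `ℝ⁶` -/

/-- The complement in `ℝ × ℝ × ℝ⁴` of the two coordinate axes of the plane `ℝ × ℝ × 0`; up to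
positive scaling this is a five-sphere with four points removed. -/
def axesCompl : Set (ℝ × ℝ × (Fin 4 → ℝ)) :=
  {p | p.2.2 = 0 → p.1 * p.2.1 ≠ 0}

/-- Two maps into `axesCompl` are homotopic through segments if their last components are
nonnegatively proportional and, where these vanish, their planar components lie in the same
quadrant. -/
theorem homotopic_of_sameQuadrant {Z : Type*} [TopologicalSpace Z] (F G : C(Z, axesCompl))
    (hY : ∀ z, ∃ c : ℝ, 0 ≤ c ∧ (G z).1.2.2 = c • (F z).1.2.2)
    (hab : ∀ z, (F z).1.2.2 = 0 →
      0 ≤ (F z).1.1 * (G z).1.1 ∧ 0 ≤ (F z).1.2.1 * (G z).1.2.1) :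
    F.Homotopic G := by
  have mem : ∀ x : unitInterval × Z,
      (1 - (x.1 : ℝ)) • (F x.2).1 + (x.1 : ℝ) • (G x.2).1 ∈ axesCompl := by
    rintro ⟨⟨t, ht0, ht1⟩, z⟩
    obtain ⟨c, hc, hGc⟩ := hY z
    have hF := (F z).2
    have hG := (G z).2
    have hab := hab z
    generalize (F z).1 = p at *
    generalize (G z).1 = q at *
    obtain ⟨a, b, Y⟩ := p
    obtain ⟨a', b', Y'⟩ := q
    simp only [axesCompl, Set.mem_ofPred_eq, Prod.smul_mk, Prod.mk_add_mk, smul_eq_mul] at *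
    subst hGc
    intro h0
    rw [smul_smul, ← add_smul, smul_eq_zero] at h0
    by_cases hY0 : Y = 0
    · obtain ⟨h1, h2⟩ := hab hY0
      have h3 := hF hY0
      have h4 := hG (by simp [hY0])
      have ha := left_ne_zero_of_mul h3
      have hb := right_ne_zero_of_mul h3
      have ha' := left_ne_zero_of_mul h4
      have hb' := right_ne_zero_of_mul h4
      have key : ∀ u v : ℝ, u ≠ 0 → v ≠ 0 → 0 ≤ u * v → (1 - t) * u + t * v ≠ 0 := by
        intro u v hu hv huv h
        have h5 : (1 - t) * (u * u) + t * (u * v) = 0 := by linear_combination u * h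
        have hu2 : 0 < u * u := mul_self_pos.2 hu
        have huv' : 0 < u * v := lt_of_le_of_ne huv (mul_ne_zero hu hv).symm
        rcases ht0.eq_or_lt with rfl | ht
        · linarith
        · nlinarith [mul_pos ht huv', mul_nonneg (sub_nonneg.2 ht1) hu2.le]
      exact mul_ne_zero (key a a' ha ha' h1) (key b b' hb hb' h2)
    · have h1 : 1 - t + t * c = 0 := h0.resolve_right hY0
      have h2 : 0 ≤ t * c := mul_nonneg ht0 hc
      obtain rfl : t = 1 := by linarith
      have hc0 : c = 0 := by linarith
      simpa [hc0] using hG (by simp [hc0])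
  exact ⟨{ toFun := fun x => ⟨_, mem x⟩
           continuous_toFun := by fun_prop
           map_zero_left := fun z => by ext1; simp
           map_one_left := fun z => by ext1; simp }⟩

/-! ### Comparison with the wedge of spheres -/

/-- Radial projection onto the unit sphere. -/
noncomputable def radialProj (d : ℕ) (v : EuclideanSpace ℝ (Fin d)) (hv : v ≠ 0) :
    sphereSpace d :=
  ⟨‖v‖⁻¹ • v, by simp [sphereSpace, norm_smul, hv]⟩

theorem continuous_radialProj {Z : Type*} [TopologicalSpace Z] {d : ℕ}
    {v : Z → EuclideanSpace ℝ (Fin d)} (hv : ∀ z, v z ≠ 0) (hc : Continuous v) :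
    Continuous fun z => radialProj d (v z) (hv z) :=
  ((hc.norm.inv₀ fun z => norm_ne_zero_iff.2 (hv z)).smul hc).subtype_mk _

theorem radialProj_apply {d : ℕ} (v : EuclideanSpace ℝ (Fin d)) (hv : v ≠ 0) (i : Fin d) :
    (radialProj d v hv).1 i = ‖v‖⁻¹ * v i := rfl

theorem radialProj_eq_of_eq {d : ℕ} {v : EuclideanSpace ℝ (Fin d)} {σ : sphereSpace d}
    (hv : v ≠ 0) (h : v = σ.1) : radialProj d v hv = σ := by
  subst h
  have h : ‖σ.1‖ = 1 := by simpa [sphereSpace] using σ.2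
  ext1
  simp [radialProj, h]

theorem sphereSpace_sq_add {n : ℕ} (σ : sphereSpace (n + 1)) :
    σ.1 0 ^ 2 + ∑ i : Fin n, σ.1 i.succ ^ 2 = 1 := by
  have h : ‖σ.1‖ = 1 := by simpa [sphereSpace] using σ.2
  rw [← Fin.sum_univ_succ (f := fun i => σ.1 i ^ 2), ← EuclideanSpace.real_norm_sq_eq, h, one_pow]

theorem spherePt_zero : (spherePt 5 (by norm_num)).1 0 = 1 := by
  simp [spherePt]

theorem spherePt_succ (i : Fin 4) : (spherePt 5 (by norm_num)).1 i.succ = 0 := by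
  simp [spherePt]

/-- A vector on the positive first half-axis projects to the base point. -/
theorem radialProj_eq_spherePt (v : EuclideanSpace ℝ (Fin 5)) (hv : v ≠ 0) (h0 : 0 < v 0)
    (hs : ∀ i : Fin 4, v i.succ = 0) : radialProj 5 v hv = spherePt 5 (by norm_num) := by
  have hn : ‖v‖ = v 0 := by
    rw [EuclideanSpace.norm_eq, Fin.sum_univ_succ]
    simp [hs, Real.sqrt_sq h0.le]
  ext i
  refine Fin.cases ?_ (fun j => ?_) i
  · rw [spherePt_zero, radialProj_apply, hn, inv_mul_cancel₀ h0.ne']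
  · rw [spherePt_succ, radialProj_apply, hs, mul_zero]

/-- Three functions on the plane, each supported on one of the quadrants other than the
positive one. -/
def quadrantWeight (k : Fin 3) (a b : ℝ) : ℝ :=
  match k with
  | 0 => max (-a) 0 * max b 0
  | 1 => max a 0 * max (-b) 0
  | 2 => max (-a) 0 * max (-b) 0

theorem continuous_quadrantWeight (k : Fin 3) :
    Continuous fun x : ℝ × ℝ => quadrantWeight k x.1 x.2 := by
  fin_cases k <;> simp only [quadrantWeight] <;> fun_prop

theorem quadrantWeight_nonneg (k : Fin 3) (a b : ℝ) : 0 ≤ quadrantWeight k a b := by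
  fin_cases k <;> simp only [quadrantWeight] <;> positivity

theorem quadrantWeight_eq_zero_or (k : Fin 3) (a b : ℝ) :
    quadrantWeight k a b = 0 ∨ quadrantWeight k a b = |a * b| := by
  rw [abs_mul]
  rcases le_total a 0 with ha | ha <;> rcases le_total b 0 with hb | hb <;> fin_cases k <;>
    simp [quadrantWeight, ha, hb, abs_of_nonneg, abs_of_nonpos]

/-- A vector whose direction is the image of a point of `axesCompl` in the `k`-th sphere. -/
noncomputable def wedgeVec (k : Fin 3) (p : ℝ × ℝ × (Fin 4 → ℝ)) : EuclideanSpace ℝ (Fin 5) :=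
  WithLp.toLp 2 (Fin.cons
    (∑ i, p.2.2 i ^ 2 + (|p.1 * p.2.1| - quadrantWeight k p.1 p.2.1) - quadrantWeight k p.1 p.2.1)
    fun i => quadrantWeight k p.1 p.2.1 * p.2.2 i)

theorem wedgeVec_zero (k : Fin 3) (p : ℝ × ℝ × (Fin 4 → ℝ)) :
    wedgeVec k p 0 = ∑ i, p.2.2 i ^ 2 + (|p.1 * p.2.1| - quadrantWeight k p.1 p.2.1)
      - quadrantWeight k p.1 p.2.1 := rfl

theorem wedgeVec_succ (k : Fin 3) (p : ℝ × ℝ × (Fin 4 → ℝ)) (i : Fin 4) :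
    wedgeVec k p i.succ = quadrantWeight k p.1 p.2.1 * p.2.2 i := rfl

theorem continuous_wedgeVec (k : Fin 3) : Continuous (wedgeVec k) := by
  have h : Continuous fun p : ℝ × ℝ × (Fin 4 → ℝ) => quadrantWeight k p.1 p.2.1 :=
    (continuous_quadrantWeight k).comp (by fun_prop : Continuous fun p :
      ℝ × ℝ × (Fin 4 → ℝ) => (p.1, p.2.1))
  refine (PiLp.continuous_toLp 2 _).comp (continuous_pi fun i => ?_)
  refine Fin.cases ?_ (fun j => ?_) i
  · simp only [Fin.cons_zero]; fun_prop
  · simp only [Fin.cons_succ]; fun_prop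

theorem sum_sq_add_abs_pos (p : axesCompl) :
    0 < ∑ i, p.1.2.2 i ^ 2 + |p.1.1 * p.1.2.1| := by
  by_cases hY : p.1.2.2 = 0
  · have := abs_pos.2 (p.2 hY)
    positivity
  · obtain ⟨i, hi⟩ := Function.ne_iff.1 hY
    have : 0 < ∑ i, p.1.2.2 i ^ 2 :=
      Finset.sum_pos' (fun _ _ => sq_nonneg _) ⟨i, Finset.mem_univ i, sq_pos_iff.2 hi⟩
    positivity

theorem wedgeVec_ne_zero (k : Fin 3) (p : axesCompl) : wedgeVec k p.1 ≠ 0 := by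
  intro h
  have h0 : wedgeVec k p.1 0 = 0 := by rw [h]; rfl
  have hs : ∀ i : Fin 4, wedgeVec k p.1 i.succ = 0 := fun i => by rw [h]; rfl
  have hpos := sum_sq_add_abs_pos p
  simp only [wedgeVec_zero, wedgeVec_succ] at h0 hs
  rcases eq_or_ne (quadrantWeight k p.1.1 p.1.2.1) 0 with hw | hw
  · rw [hw] at h0
    linarith
  · have hw' := (quadrantWeight_eq_zero_or k p.1.1 p.1.2.1).resolve_left hw
    have hY : ∀ i, p.1.2.2 i = 0 := fun i => (mul_eq_zero.1 (hs i)).resolve_left hw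
    simp only [hY] at h0
    apply hw
    rw [← hw'] at h0
    simpa using h0

/-- The `k`-th coordinate of the comparison map from `axesCompl` to the wedge. -/
noncomputable def wedgeCoord (k : Fin 3) (p : axesCompl) : sphereSpace 5 :=
  radialProj 5 (wedgeVec k p.1) (wedgeVec_ne_zero k p)

theorem continuous_wedgeCoord (k : Fin 3) : Continuous (wedgeCoord k) :=
  continuous_radialProj _ ((continuous_wedgeVec k).comp continuous_subtype_val)

theorem wedgeCoord_eq_spherePt {k : Fin 3} {p : axesCompl}
    (h : quadrantWeight k p.1.1 p.1.2.1 = 0) : wedgeCoord k p = spherePt 5 (by norm_num) := by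
  refine radialProj_eq_spherePt _ _ ?_ fun i => ?_
  · have := sum_sq_add_abs_pos p
    rw [wedgeVec_zero, h]
    linarith
  · rw [wedgeVec_succ, h, zero_mul]

/-- Away from the last four coordinates, a nonzero weight gives the antipode of the base point. -/
theorem wedgeCoord_zero_eq_neg_one {k : Fin 3} {p : axesCompl}
    (h : quadrantWeight k p.1.1 p.1.2.1 ≠ 0) (hY : p.1.2.2 = 0) :
    (wedgeCoord k p).1 0 = -1 := by
  have hw := (quadrantWeight_eq_zero_or k p.1.1 p.1.2.1).resolve_left h
  have h0 : wedgeVec k p.1 0 = -quadrantWeight k p.1.1 p.1.2.1 := by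
    simp [wedgeVec_zero, hY, ← hw]
  have hpos := lt_of_le_of_ne (quadrantWeight_nonneg k p.1.1 p.1.2.1) h.symm
  have hn : ‖wedgeVec k p.1‖ = quadrantWeight k p.1.1 p.1.2.1 := by
    rw [EuclideanSpace.norm_eq, Fin.sum_univ_succ]
    simp [wedgeVec_succ, hY, h0, Real.sqrt_sq hpos.le]
  rw [wedgeCoord, radialProj_apply, hn, h0]
  field_simp

theorem wedgeCoord_succ (k : Fin 3) (p : axesCompl) (i : Fin 4) : (wedgeCoord k p).1 i.succ =
    ‖wedgeVec k p.1‖⁻¹ * quadrantWeight k p.1.1 p.1.2.1 * p.1.2.2 i := by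
  rw [wedgeCoord, radialProj_apply, wedgeVec_succ, mul_assoc]

/-- The wedge of three four-spheres. -/
abbrev FourSphereWedge : Type :=
  Wedge (Fin 3) (↥(sphereSpace 5)) (spherePt 5 (by norm_num))

/-- The inclusion of the `k`-th sphere into the wedge. -/
def wedgeIncl (k : Fin 3) (σ : sphereSpace 5) : FourSphereWedge := Quot.mk _ ⟨k, σ⟩

theorem continuous_wedgeIncl (k : Fin 3) : Continuous (wedgeIncl k) :=
  continuous_quot_mk.comp continuous_sigmaMk

theorem wedgeIncl_spherePt (j k : Fin 3) :
    wedgeIncl j (spherePt 5 (by norm_num)) = wedgeIncl k (spherePt 5 (by norm_num)) :=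
  Quot.sound ⟨rfl, rfl⟩

open Classical in
/-- The comparison map from `axesCompl` to the wedge: it collapses everything outside three of
the four quadrants to the base point. -/
noncomputable def toWedge (p : axesCompl) : FourSphereWedge :=
  if p.1.1 ≤ 0 then
    if p.1.2.1 ≤ 0 then wedgeIncl 2 (wedgeCoord 2 p) else wedgeIncl 0 (wedgeCoord 0 p)
  else wedgeIncl 1 (wedgeCoord 1 p)

theorem wedgeIncl_wedgeCoord_eq {j k : Fin 3} {p : axesCompl}
    (hj : quadrantWeight j p.1.1 p.1.2.1 = 0) (hk : quadrantWeight k p.1.1 p.1.2.1 = 0) :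
    wedgeIncl j (wedgeCoord j p) = wedgeIncl k (wedgeCoord k p) := by
  rw [wedgeCoord_eq_spherePt hj, wedgeCoord_eq_spherePt hk]
  exact wedgeIncl_spherePt j k

theorem continuous_toWedge : Continuous toWedge := by
  have hc := fun k => (continuous_wedgeIncl k).comp (continuous_wedgeCoord k)
  refine Continuous.if_le (Continuous.if_le (hc 2) (hc 0) (by fun_prop) continuous_const ?_)
    (hc 1) (by fun_prop) continuous_const ?_
  · intro p hp
    exact wedgeIncl_wedgeCoord_eq (by simp [quadrantWeight, hp]) (by simp [quadrantWeight, hp])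
  · intro p hp
    split_ifs <;>
      exact wedgeIncl_wedgeCoord_eq (by simp [quadrantWeight, hp]) (by simp [quadrantWeight, hp])

/-- The embedding of the `k`-th sphere into `axesCompl`: its planar component runs from the
positive quadrant to the `k`-th one. -/
def sphereLoop (k : Fin 3) (σ : sphereSpace 5) : axesCompl :=
  ⟨(if k = 1 then 1 else σ.1 0, if k = 0 then 1 else σ.1 0, fun i => σ.1 i.succ), by
    intro h
    have h1 := sphereSpace_sq_add σ
    have h2 : ∀ i : Fin 4, σ.1 i.succ = 0 := fun i => congrFun h i
    have h3 : σ.1 0 ≠ 0 := by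
      intro h4
      simp [h2, h4] at h1
    fin_cases k <;> simp [h3]⟩

theorem continuous_sphereLoop (k : Fin 3) : Continuous (sphereLoop k) := by
  refine Continuous.subtype_mk ?_ _
  refine Continuous.prodMk ?_ (Continuous.prodMk ?_ ?_)
  · split_ifs <;> fun_prop
  · split_ifs <;> fun_prop
  · fun_prop

theorem sphereLoop_spherePt (k : Fin 3) :
    (sphereLoop k (spherePt 5 (by norm_num))).1 = (1, 1, 0) := by
  ext <;> simp [sphereLoop, spherePt_zero, spherePt_succ]

/-- The map from the wedge to `axesCompl` assembled from the three embedded spheres. -/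
def ofWedge : FourSphereWedge → axesCompl :=
  Quot.lift (fun x => sphereLoop x.1 x.2) (by
    rintro ⟨j, σ⟩ ⟨k, ρ⟩ ⟨rfl, rfl⟩
    exact Subtype.ext ((sphereLoop_spherePt j).trans (sphereLoop_spherePt k).symm))

theorem continuous_ofWedge : Continuous ofWedge :=
  continuous_quot_lift _ (continuous_sigma fun k => continuous_sphereLoop k)

theorem ofWedge_toWedge_homotopic :
    ((⟨ofWedge, continuous_ofWedge⟩ : C(_, _)).comp ⟨toWedge, continuous_toWedge⟩).Homotopic
      (ContinuousMap.id axesCompl) := by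
  refine (homotopic_of_sameQuadrant _ _ (fun p => ?_) fun p hY => ?_).symm
  · have key : ∀ k, ∃ c : ℝ, 0 ≤ c ∧ (sphereLoop k (wedgeCoord k p)).1.2.2 = c • p.1.2.2 :=
      fun k => ⟨_, mul_nonneg (inv_nonneg.2 (norm_nonneg (wedgeVec k p.1)))
        (quadrantWeight_nonneg k _ _), funext fun i => wedgeCoord_succ k p i⟩
    change ∃ c : ℝ, 0 ≤ c ∧ (ofWedge (toWedge p)).1.2.2 = c • p.1.2.2
    unfold toWedge
    split_ifs
    exacts [key 2, key 0, key 1]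
  · change p.1.2.2 = 0 at hY
    have hne := p.2 hY
    have ha := left_ne_zero_of_mul hne
    have hb := right_ne_zero_of_mul hne
    change 0 ≤ p.1.1 * (ofWedge (toWedge p)).1.1 ∧ 0 ≤ p.1.2.1 * (ofWedge (toWedge p)).1.2.1
    have key : ∀ k, quadrantWeight k p.1.1 p.1.2.1 ≠ 0 → (sphereLoop k (wedgeCoord k p)).1 =
        (if k = 1 then 1 else -1, if k = 0 then 1 else -1, (sphereLoop k (wedgeCoord k p)).1.2.2) :=
      fun k hk => by simp [sphereLoop, wedgeCoord_zero_eq_neg_one hk hY]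
    unfold toWedge
    split_ifs with h1 h2
    · have h1' := lt_of_le_of_ne h1 ha
      have h2' := lt_of_le_of_ne h2 hb
      change 0 ≤ p.1.1 * (sphereLoop 2 (wedgeCoord 2 p)).1.1 ∧
        0 ≤ p.1.2.1 * (sphereLoop 2 (wedgeCoord 2 p)).1.2.1
      rw [key 2 (by simp [quadrantWeight, h1', h2'])]
      simp [h1, h2]
    · have h1' := lt_of_le_of_ne h1 ha
      rw [not_le] at h2
      change 0 ≤ p.1.1 * (sphereLoop 0 (wedgeCoord 0 p)).1.1 ∧
        0 ≤ p.1.2.1 * (sphereLoop 0 (wedgeCoord 0 p)).1.2.1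
      rw [key 0 (by simp [quadrantWeight, h1', h2])]
      simp [h1, h2.le]
    · rw [not_le] at h1
      change 0 ≤ p.1.1 * (sphereLoop 1 (wedgeCoord 1 p)).1.1 ∧
        0 ≤ p.1.2.1 * (sphereLoop 1 (wedgeCoord 1 p)).1.2.1
      rcases hb.lt_or_gt with h2 | h2
      · rw [key 1 (by simp [quadrantWeight, h1, h2])]
        simp [h1.le, h2.le]
      · rw [wedgeCoord_eq_spherePt (by simp [quadrantWeight, h2.le]), sphereLoop_spherePt]
        simp [h1.le, h2.le]

theorem toWedge_sphereLoop (k : Fin 3) (σ : sphereSpace 5) :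
    toWedge (sphereLoop k σ) = wedgeIncl k (wedgeCoord k (sphereLoop k σ)) := by
  unfold toWedge
  rcases le_or_gt (σ.1 0) 0 with h | h
  · fin_cases k <;> simp [sphereLoop, h]
  · fin_cases k
    · exact (if_neg (by simpa [sphereLoop] using h)).trans (wedgeIncl_wedgeCoord_eq
        (by simp [sphereLoop, quadrantWeight]) (by simp [sphereLoop, quadrantWeight, h.le]))
    · simp [sphereLoop]
    · exact (if_neg (by simpa [sphereLoop] using h)).trans (wedgeIncl_wedgeCoord_eq
        (by simp [sphereLoop, quadrantWeight, h.le]) (by simp [sphereLoop, quadrantWeight, h.le]))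

theorem wedgeCoord_sphereLoop_spherePt (k : Fin 3) :
    wedgeCoord k (sphereLoop k (spherePt 5 (by norm_num))) = spherePt 5 (by norm_num) :=
  wedgeCoord_eq_spherePt (by
    rw [sphereLoop_spherePt]
    fin_cases k <;> simp [quadrantWeight])

theorem segment_wedgeCoord_sphereLoop_ne_zero (k : Fin 3) (t : unitInterval) (σ : sphereSpace 5) :
    (1 - (t : ℝ)) • (wedgeCoord k (sphereLoop k σ)).1 + (t : ℝ) • σ.1 ≠ 0 := by
  intro h
  have hcoord : ∀ i, (1 - (t : ℝ)) * (wedgeCoord k (sphereLoop k σ)).1 i + t * σ.1 i = 0 :=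
    fun i => by simpa using congrArg (fun v : EuclideanSpace ℝ (Fin 5) => v i) h
  by_cases hσ : ∀ i : Fin 4, σ.1 i.succ = 0
  · have hsq := sphereSpace_sq_add σ
    simp only [hσ, ne_eq, OfNat.ofNat_ne_zero, not_false_eq_true, zero_pow,
      Finset.sum_const_zero, add_zero] at hsq
    have hY : (sphereLoop k σ).1.2.2 = 0 := funext hσ
    have h0 := hcoord 0
    rcases eq_or_eq_neg_of_sq_eq_sq _ _ (hsq.trans (one_pow 2).symm) with h1 | h1
    · have hw : quadrantWeight k (sphereLoop k σ).1.1 (sphereLoop k σ).1.2.1 = 0 := by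
        fin_cases k <;> simp [quadrantWeight, sphereLoop, h1]
      rw [wedgeCoord_eq_spherePt hw, spherePt_zero, h1] at h0
      linarith
    · have hw : quadrantWeight k (sphereLoop k σ).1.1 (sphereLoop k σ).1.2.1 ≠ 0 := by
        fin_cases k <;> simp [quadrantWeight, sphereLoop, h1]
      rw [wedgeCoord_zero_eq_neg_one hw hY, h1] at h0
      linarith
  · push Not at hσ
    obtain ⟨i, hi⟩ := hσ
    have hc := mul_nonneg (inv_nonneg.2 (norm_nonneg (wedgeVec k (sphereLoop k σ).1)))
      (quadrantWeight_nonneg k (sphereLoop k σ).1.1 (sphereLoop k σ).1.2.1)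
    have hs := hcoord i.succ
    rw [wedgeCoord_succ] at hs
    generalize ‖wedgeVec k (sphereLoop k σ).1‖⁻¹ * quadrantWeight k (sphereLoop k σ).1.1
      (sphereLoop k σ).1.2.1 = c at hs hc
    have hs' : ((1 - (t : ℝ)) * c + t) * σ.1 i.succ = 0 := by
      rw [← hs, add_mul, mul_assoc]
      rfl
    have hsum := (mul_eq_zero.1 hs').resolve_right hi
    have ht : (t : ℝ) = 0 := by
      nlinarith [t.2.1, mul_nonneg (sub_nonneg.2 t.2.2) hc]
    have hv : ∀ j, (wedgeCoord k (sphereLoop k σ)).1 j = 0 := fun j => by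
      simpa [ht] using hcoord j
    simpa [hv] using sphereSpace_sq_add (wedgeCoord k (sphereLoop k σ))

/-- The homotopy from the collapse of the `k`-th sphere to the identity. -/
noncomputable def sphereHomotopy (k : Fin 3) :
    C(sphereSpace 5 × unitInterval, FourSphereWedge) where
  toFun x := wedgeIncl k (radialProj 5 _ (segment_wedgeCoord_sphereLoop_ne_zero k x.2 x.1))
  continuous_toFun := by
    refine (continuous_wedgeIncl k).comp (continuous_radialProj _ ?_)
    have h := (continuous_wedgeCoord k).comp (continuous_sphereLoop k)
    have h' : Continuous fun σ => (wedgeCoord k (sphereLoop k σ)).1 :=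
      continuous_subtype_val.comp h
    exact ((continuous_const.sub (continuous_subtype_val.comp continuous_snd)).smul
      (h'.comp continuous_fst)).add ((continuous_subtype_val.comp continuous_snd).smul
      (continuous_subtype_val.comp continuous_fst))

theorem sphereHomotopy_spherePt (k : Fin 3) (t : unitInterval) :
    sphereHomotopy k (spherePt 5 (by norm_num), t) = wedgeIncl k (spherePt 5 (by norm_num)) := by
  refine congrArg (wedgeIncl k) (radialProj_eq_spherePt _ _ ?_ fun i => ?_)
  · simp [wedgeCoord_sphereLoop_spherePt, spherePt_zero]
  · simp [wedgeCoord_sphereLoop_spherePt, spherePt_succ]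

theorem sphereHomotopy_zero (k : Fin 3) (σ : sphereSpace 5) :
    sphereHomotopy k (σ, 0) = toWedge (sphereLoop k σ) := by
  rw [toWedge_sphereLoop]
  exact congrArg (wedgeIncl k) (radialProj_eq_of_eq _ (by simp))

theorem sphereHomotopy_one (k : Fin 3) (σ : sphereSpace 5) :
    sphereHomotopy k (σ, 1) = wedgeIncl k σ :=
  congrArg (wedgeIncl k) (radialProj_eq_of_eq _ (by simp))

theorem toWedge_ofWedge_homotopic :
    ((⟨toWedge, continuous_toWedge⟩ : C(_, _)).comp ⟨ofWedge, continuous_ofWedge⟩).Homotopic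
      (ContinuousMap.id FourSphereWedge) := by
  let paths : FourSphereWedge → C(unitInterval, FourSphereWedge) :=
    Quot.lift (fun x => (sphereHomotopy x.1).curry x.2) (by
      rintro ⟨j, σ⟩ ⟨k, ρ⟩ ⟨rfl, rfl⟩
      ext t
      exact (sphereHomotopy_spherePt j t).trans
        ((wedgeIncl_spherePt j k).trans (sphereHomotopy_spherePt k t).symm))
  have hpaths : Continuous paths :=
    continuous_quot_lift _ (continuous_sigma fun k => (sphereHomotopy k).curry.continuous)
  exact ⟨{ toFun := fun x => paths x.2 x.1
           continuous_toFun := (hpaths.comp continuous_snd).eval continuous_fst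
           map_zero_left := by
             rintro ⟨k, σ⟩
             exact sphereHomotopy_zero k σ
           map_one_left := by
             rintro ⟨k, σ⟩
             exact sphereHomotopy_one k σ }⟩

/-- The complement of the axes is homotopy equivalent to the wedge of three four-spheres. -/
noncomputable def axesComplEquivWedge :
    ContinuousMap.HomotopyEquiv axesCompl FourSphereWedge where
  toFun := ⟨toWedge, continuous_toWedge⟩
  invFun := ⟨ofWedge, continuous_ofWedge⟩
  left_inv := ofWedge_toWedge_homotopic
  right_inv := toWedge_ofWedge_homotopic

/-! ### The theta complex in coordinates -/

/-- The vertices of the three-cube with an even number of ones. -/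
def evenVertex (i : Fin 4) : Fin 3 → Bool :=
  ![i.val.testBit 0, i.val.testBit 1, i.val.testBit 0 ^^ i.val.testBit 1]

/-- The antipodes of the vertices `evenVertex i`. -/
def oddVertex (i : Fin 4) : Fin 3 → Bool := fun l => !evenVertex i l

/-- The index of the antipodal pair containing a vertex. -/
def pairIndex (v : Fin 3 → Bool) : Fin 4 :=
  bif v 0 ^^ v 1 ^^ v 2 then
    bif v 0 then bif v 1 then 0 else 2 else bif v 1 then 1 else 3
  else bif v 0 then bif v 1 then 3 else 1 else bif v 1 then 2 else 0

theorem exists_eq_vertex (v : Fin 3 → Bool) :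
    v = evenVertex (pairIndex v) ∧ (v 0 ^^ v 1 ^^ v 2) = false ∨
      v = oddVertex (pairIndex v) ∧ (v 0 ^^ v 1 ^^ v 2) = true := by
  revert v
  decide

theorem parity_evenVertex (i : Fin 4) : pairIndex (evenVertex i) = i ∧
    (evenVertex i 0 ^^ evenVertex i 1 ^^ evenVertex i 2) = false := by
  revert i
  decide

theorem parity_oddVertex (i : Fin 4) : pairIndex (oddVertex i) = i ∧
    (oddVertex i 0 ^^ oddVertex i 1 ^^ oddVertex i 2) = true := by
  revert i
  decide

theorem univ_eq_image_vertex : (Finset.univ : Finset (Fin 3 → Bool)) =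
    Finset.univ.image evenVertex ∪ Finset.univ.image oddVertex := by
  decide

theorem sum_vertex (f : (Fin 3 → Bool) → ℝ) :
    ∑ v, f v = ∑ i, f (evenVertex i) + ∑ i, f (oddVertex i) := by
  rw [univ_eq_image_vertex, Finset.sum_union (by decide), Finset.sum_image, Finset.sum_image]
  · intro i _ j _ h
    rw [← (parity_oddVertex i).1, h, (parity_oddVertex j).1]
  · intro i _ j _ h
    rw [← (parity_evenVertex i).1, h, (parity_evenVertex j).1]

theorem exists_vertices_mem_edge : ∀ (s : Finset (Fin 3)) (g : Fin 3 → Bool), s.card = 2 →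
    ∃ i j, i ≠ j ∧ (∀ l ∈ s, evenVertex i l = g l) ∧ ∀ l ∈ s, oddVertex j l = g l := by
  decide

theorem exists_edge_of_ne : ∀ i j : Fin 4, i ≠ j → ∃ (s : Finset (Fin 3)) (g : Fin 3 → Bool),
    s.card = 2 ∧ ∀ v : Fin 3 → Bool, (∀ l ∈ s, v l = g l) → v = evenVertex i ∨ v = oddVertex j := by
  decide

theorem mem_geomReal_iff (f : (Fin 3 → Bool) → ℝ) :
    f ∈ geomReal (thetaComplex (cubeEdges 3 1)) ↔
      (∀ v, 0 ≤ f v) ∧ ∑ v, f v = 1 ∧ ∃ i j, i ≠ j ∧ f (evenVertex i) = 0 ∧ f (oddVertex j) = 0 := by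
  constructor
  · rintro ⟨h0, σ, ⟨-, _, ⟨s, g, hs, rfl⟩, hσ⟩, hsupp, hsum⟩
    refine ⟨h0, ?_, ?_⟩
    · rw [← hsum]
      refine (Finset.sum_subset (Finset.subset_univ σ) fun v _ hv => ?_).symm
      exact not_not.1 fun h => hv (hsupp v h)
    · obtain ⟨i, j, hij, hi, hj⟩ := exists_vertices_mem_edge s g hs
      exact ⟨i, j, hij, not_not.1 fun h => hσ _ (hsupp _ h) hi,
        not_not.1 fun h => hσ _ (hsupp _ h) hj⟩
  · rintro ⟨h0, hsum, i, j, hij, hi, hj⟩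
    obtain ⟨s, g, hs, hsg⟩ := exists_edge_of_ne i j hij
    have hsum' : ∑ v ∈ Finset.univ.filter (f · ≠ 0), f v = 1 := by
      rw [Finset.sum_filter_ne_zero, hsum]
    refine ⟨h0, Finset.univ.filter (f · ≠ 0), ⟨?_, _, ⟨s, g, hs, rfl⟩, ?_⟩, by simp, hsum'⟩
    · by_contra h
      rw [Finset.not_nonempty_iff_eq_empty] at h
      simp [h] at hsum'
    · intro v hv hvs
      rcases hsg v hvs with rfl | rfl <;> simp_all

/-- The function on cube vertices with values `A` on even and `B` on odd vertices. -/
def vertexFun (A B : Fin 4 → ℝ) (v : Fin 3 → Bool) : ℝ :=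
  bif v 0 ^^ v 1 ^^ v 2 then B (pairIndex v) else A (pairIndex v)

theorem vertexFun_even (A B : Fin 4 → ℝ) (i : Fin 4) : vertexFun A B (evenVertex i) = A i := by
  rw [vertexFun, (parity_evenVertex i).1, (parity_evenVertex i).2, cond_false]

theorem vertexFun_odd (A B : Fin 4 → ℝ) (i : Fin 4) : vertexFun A B (oddVertex i) = B i := by
  rw [vertexFun, (parity_oddVertex i).1, (parity_oddVertex i).2, cond_true]

theorem vertex_funext {f g : (Fin 3 → Bool) → ℝ} (he : ∀ i, f (evenVertex i) = g (evenVertex i))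
    (ho : ∀ i, f (oddVertex i) = g (oddVertex i)) : f = g := by
  funext v
  rcases exists_eq_vertex v with ⟨h, -⟩ | ⟨h, -⟩ <;> rw [h]
  exacts [he _, ho _]

/-! ### Comparison of the theta complex with the complement of the axes -/

/-- Piecewise linear coordinates on `ℝ⁴ × ℝ⁴` modulo constants in each factor. -/
noncomputable def planeCoords (A B : Fin 4 → ℝ) : ℝ × ℝ × (Fin 4 → ℝ) :=
  (A 0 + B 0 - (A 3 + B 3), A 1 + B 1 - (A 2 + B 2),
    ![max (A 0 + B 0) (A 3 + B 3) - max (A 1 + B 1) (A 2 + B 2),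
      A 0 - B 0 - (A 3 - B 3), A 1 - B 1 - (A 3 - B 3), A 2 - B 2 - (A 3 - B 3)])

theorem continuous_planeCoords :
    Continuous fun x : (Fin 4 → ℝ) × (Fin 4 → ℝ) => planeCoords x.1 x.2 := by
  refine Continuous.prodMk (by fun_prop) (Continuous.prodMk (by fun_prop)
    (continuous_pi fun i => ?_))
  fin_cases i <;> simp <;> fun_prop

theorem planeCoords_smul {t : ℝ} (ht : 0 ≤ t) (A B : Fin 4 → ℝ) :
    planeCoords (t • A) (t • B) = t • planeCoords A B := by
  simp only [planeCoords, Prod.smul_mk, Matrix.smul_cons, Matrix.smul_empty, smul_eq_mul,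
    Pi.smul_apply, mul_sub, mul_add, mul_max_of_nonneg _ _ ht]

/-- The common part of the inverse coordinates. -/
noncomputable def symPart (p : ℝ × ℝ × (Fin 4 → ℝ)) : Fin 4 → ℝ :=
  ![p.2.2 0 - max (-p.1) 0, -max (-p.2.1) 0, -max p.2.1 0, p.2.2 0 - max p.1 0]

/-- The difference part of the inverse coordinates. -/
def antiPart (p : ℝ × ℝ × (Fin 4 → ℝ)) : Fin 4 → ℝ := ![p.2.2 1, p.2.2 2, p.2.2 3, 0]

/-- A vector shifted so that its least entry becomes zero. -/
noncomputable def subMin (A : Fin 4 → ℝ) (i : Fin 4) : ℝ :=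
  A i - Finset.univ.inf' Finset.univ_nonempty A

theorem subMin_nonneg (A : Fin 4 → ℝ) (i : Fin 4) : 0 ≤ subMin A i :=
  sub_nonneg.2 (Finset.inf'_le _ (Finset.mem_univ i))

theorem exists_subMin_eq_zero (A : Fin 4 → ℝ) : ∃ i, subMin A i = 0 := by
  obtain ⟨i, -, hi⟩ := Finset.exists_mem_eq_inf' Finset.univ_nonempty A
  exact ⟨i, by rw [subMin, hi, sub_self]⟩

theorem continuous_subMin : Continuous subMin :=
  continuous_pi fun i => (continuous_apply i).sub
    (Continuous.finset_inf'_apply _ fun j _ => continuous_apply j)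

/-- Scaling and shifting a nonnegative vector that has a zero entry is undone, up to the scale,
by `subMin`. -/
theorem subMin_affine {A A' : Fin 4 → ℝ} {r s : ℝ} (hr : 0 ≤ r) (h0 : ∀ i, 0 ≤ A i)
    (hz : ∃ i, A i = 0) (hA : ∀ i, A' i = r * A i + s) (i : Fin 4) : subMin A' i = r * A i := by
  have h : Finset.univ.inf' Finset.univ_nonempty A' = s := by
    apply le_antisymm
    · obtain ⟨j, hj⟩ := hz
      exact (Finset.inf'_le _ (Finset.mem_univ j)).trans (by rw [hA, hj]; simp)
    · refine Finset.le_inf' _ _ fun j _ => ?_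
      rw [hA]
      linarith [mul_nonneg hr (h0 j)]
  rw [subMin, h, hA]
  ring

/-- The least level at which the truncations of `A` and `B` vanish at two different indices. -/
noncomputable def level (A B : Fin 4 → ℝ) : ℝ :=
  (Finset.univ : Finset (Fin 4)).offDiag.inf' ⟨(0, 1), by decide⟩ fun x => max (A x.1) (B x.2)

theorem level_le (A B : Fin 4 → ℝ) {i j : Fin 4} (h : i ≠ j) : level A B ≤ max (A i) (B j) :=
  Finset.inf'_le (fun x : Fin 4 × Fin 4 => max (A x.1) (B x.2)) (b := (i, j)) (by simpa using h)

theorem exists_eq_level (A B : Fin 4 → ℝ) : ∃ i j, i ≠ j ∧ level A B = max (A i) (B j) := by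
  obtain ⟨⟨i, j⟩, hij, h⟩ := Finset.exists_mem_eq_inf'
    (⟨(0, 1), by decide⟩ : (Finset.univ : Finset (Fin 4)).offDiag.Nonempty)
    fun x => max (A x.1) (B x.2)
  exact ⟨i, j, by simpa using hij, h⟩

theorem continuous_level : Continuous fun x : (Fin 4 → ℝ) × (Fin 4 → ℝ) => level x.1 x.2 :=
  Continuous.finset_inf'_apply _ fun _ _ => by fun_prop

/-- The level of nonnegative vectors with zero entries is positive only if they have a single
common zero. -/
theorem level_eq_zero_or {A B : Fin 4 → ℝ} (hA : ∀ i, 0 ≤ A i) (hB : ∀ i, 0 ≤ B i)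
    (hA0 : ∃ i, A i = 0) (hB0 : ∃ i, B i = 0) :
    level A B = 0 ∨ 0 < level A B ∧ ∃ p, A p = 0 ∧ B p = 0 ∧
      ∀ j, j ≠ p → level A B ≤ A j ∧ level A B ≤ B j := by
  have h0 : 0 ≤ level A B := by
    obtain ⟨i, j, -, h⟩ := exists_eq_level A B
    exact h ▸ (hA i).trans (le_max_left _ _)
  obtain ⟨i, hi⟩ := hA0
  obtain ⟨j, hj⟩ := hB0
  by_cases hij : i = j
  · subst hij
    rcases h0.eq_or_lt with h | h
    · exact .inl h.symm
    · refine .inr ⟨h, i, hi, hj, fun l hl => ⟨?_, ?_⟩⟩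
      · simpa [hj, hA l] using level_le A B hl
      · simpa [hi, hB l] using level_le A B hl.symm
  · exact .inl (le_antisymm (by simpa [hi, hj] using level_le A B hij) h0)

/-- The even vector obtained from a point of `ℝ × ℝ × ℝ⁴` by inverting `planeCoords`. -/
noncomputable def liftA (p : ℝ × ℝ × (Fin 4 → ℝ)) : Fin 4 → ℝ := subMin (symPart p + antiPart p)

/-- The odd counterpart of `liftA`. -/
noncomputable def liftB (p : ℝ × ℝ × (Fin 4 → ℝ)) : Fin 4 → ℝ := subMin (symPart p - antiPart p)

theorem continuous_symPart : Continuous symPart := by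
  refine continuous_pi fun i => ?_
  fin_cases i <;> simp [symPart] <;> fun_prop

theorem continuous_antiPart : Continuous antiPart := by
  refine continuous_pi fun i => ?_
  fin_cases i <;> simp [antiPart] <;> fun_prop

theorem continuous_liftA : Continuous liftA :=
  continuous_subMin.comp (continuous_symPart.add continuous_antiPart)

theorem continuous_liftB : Continuous liftB :=
  continuous_subMin.comp (continuous_symPart.sub continuous_antiPart)

/-- The truncation level of the lift of a point. -/
noncomputable def liftLevel (p : ℝ × ℝ × (Fin 4 → ℝ)) : ℝ := level (liftA p) (liftB p)

theorem continuous_liftLevel : Continuous liftLevel :=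
  continuous_level.comp (continuous_liftA.prodMk continuous_liftB)

/-- The unnormalized point of the theta complex associated with a point of `axesCompl`. -/
noncomputable def truncLift (p : ℝ × ℝ × (Fin 4 → ℝ)) : (Fin 3 → Bool) → ℝ :=
  vertexFun (fun i => max (liftA p i - liftLevel p) 0) (fun i => max (liftB p i - liftLevel p) 0)

theorem continuous_truncLift : Continuous truncLift := by
  have hA := continuous_liftA
  have hB := continuous_liftB
  have hl := continuous_liftLevel
  refine continuous_pi fun v => ?_
  simp only [truncLift, vertexFun]
  cases v 0 ^^ v 1 ^^ v 2 <;> simp only [cond_true, cond_false] <;> fun_prop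

theorem truncLift_nonneg (p : ℝ × ℝ × (Fin 4 → ℝ)) (v : Fin 3 → Bool) : 0 ≤ truncLift p v := by
  unfold truncLift vertexFun
  cases v 0 ^^ v 1 ^^ v 2 <;> exact le_max_right _ _

theorem exists_liftA_sub (p : ℝ × ℝ × (Fin 4 → ℝ)) :
    ∃ s, ∀ i, liftA p i = symPart p i + antiPart p i - s := ⟨_, fun _ => rfl⟩

theorem exists_liftB_sub (p : ℝ × ℝ × (Fin 4 → ℝ)) :
    ∃ s, ∀ i, liftB p i = symPart p i - antiPart p i - s := ⟨_, fun _ => rfl⟩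

theorem liftLevel_eq_zero_or (p : ℝ × ℝ × (Fin 4 → ℝ)) :
    liftLevel p = 0 ∨ 0 < liftLevel p ∧ ∃ q, liftA p q = 0 ∧ liftB p q = 0 ∧
      ∀ j, j ≠ q → liftLevel p ≤ liftA p j ∧ liftLevel p ≤ liftB p j :=
  level_eq_zero_or (subMin_nonneg _) (subMin_nonneg _) (exists_subMin_eq_zero _)
    (exists_subMin_eq_zero _)

theorem symPart_spec (p : ℝ × ℝ × (Fin 4 → ℝ)) :
    max (symPart p 0) (symPart p 3) = p.2.2 0 ∧ max (symPart p 1) (symPart p 2) = 0 ∧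
      symPart p 0 - symPart p 3 = p.1 ∧ symPart p 1 - symPart p 2 = p.2.1 := by
  obtain ⟨a, b, Y⟩ := p
  simp only [symPart, Matrix.cons_val]
  grind

/-- Raising a least entry of a vector, without letting it pass the others, keeps the signs of the
differences `c 0 - c 3` and `c 1 - c 2` and changes at most one of them. -/
theorem truncation_comparison {c A B : Fin 4 → ℝ}
    (h : ∃ K q, (∀ j, j ≠ q → A j + B j = 2 * c j + K) ∧
      (A q + B q = 2 * c q + K ∨ 2 * c q + K ≤ A q + B q ∧ ∀ j, A q + B q ≤ A j + B j)) :
    max (A 0 + B 0) (A 3 + B 3) - max (A 1 + B 1) (A 2 + B 2) =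
        2 * max (c 0) (c 3) - 2 * max (c 1) (c 2) ∧
      0 ≤ (c 0 - c 3) * (A 0 + B 0 - (A 3 + B 3)) ∧
      0 ≤ (c 1 - c 2) * (A 1 + B 1 - (A 2 + B 2)) ∧
      (A 0 + B 0 - (A 3 + B 3) = 2 * (c 0 - c 3) ∨
        A 1 + B 1 - (A 2 + B 2) = 2 * (c 1 - c 2)) := by
  obtain ⟨K, q, hj, hq⟩ := h
  have hsign : ∀ i j, 0 ≤ (c i - c j) * (A i + B i - (A j + B j)) := by
    intro i j
    have hi' := hj i
    have hj' := hj j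
    refine mul_nonneg_iff.2 ?_
    grind
  refine ⟨?_, hsign 0 3, hsign 1 2, ?_⟩
  · have h0 := hj 0
    have h1 := hj 1
    have h2 := hj 2
    have h3 := hj 3
    fin_cases q <;> simp at h0 h1 h2 h3 hq <;> grind
  · fin_cases q
    · exact .inr (by linarith [hj 1 (by decide), hj 2 (by decide)])
    · exact .inl (by linarith [hj 0 (by decide), hj 3 (by decide)])
    · exact .inl (by linarith [hj 0 (by decide), hj 3 (by decide)])
    · exact .inr (by linarith [hj 1 (by decide), hj 2 (by decide)])

/-- Piecewise linear coordinates of the truncated lift: the last four are recovered up to the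
factor two, and the planar ones keep their quadrant. -/
theorem planeCoords_truncLift (p : ℝ × ℝ × (Fin 4 → ℝ)) :
    let q := planeCoords (fun i => truncLift p (evenVertex i)) fun i => truncLift p (oddVertex i)
    q.2.2 = (2 : ℝ) • p.2.2 ∧ 0 ≤ p.1 * q.1 ∧ 0 ≤ p.2.1 * q.2.1 ∧
      (q.1 = 2 * p.1 ∨ q.2.1 = 2 * p.2.1) := by
  simp only [truncLift, vertexFun_even, vertexFun_odd]
  obtain ⟨s, hs⟩ := exists_liftA_sub p
  obtain ⟨s', hs'⟩ := exists_liftB_sub p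
  have hA : ∀ i, 0 ≤ liftA p i := subMin_nonneg _
  have hB : ∀ i, 0 ≤ liftB p i := subMin_nonneg _
  have hlevel := liftLevel_eq_zero_or p
  set A : Fin 4 → ℝ := fun i => max (liftA p i - liftLevel p) 0 with hAdef
  set B : Fin 4 → ℝ := fun i => max (liftB p i - liftLevel p) 0 with hBdef
  have hsum : ∃ K q, (∀ j, j ≠ q → A j + B j = 2 * symPart p j + K) ∧
      (A q + B q = 2 * symPart p q + K ∨
        2 * symPart p q + K ≤ A q + B q ∧ ∀ j, A q + B q ≤ A j + B j) := by
    rcases hlevel with hL | ⟨hL, q, hqA, hqB, hq⟩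
    · have h : ∀ j, A j + B j = 2 * symPart p j + (-s - s') := fun j => by
        simp only [hAdef, hBdef, hL, sub_zero, max_eq_left (hA j), max_eq_left (hB j)]
        rw [hs, hs']
        ring
      exact ⟨_, 0, fun j _ => h j, .inl (h 0)⟩
    · have hAq : A q = 0 := max_eq_right (by linarith)
      have hBq : B q = 0 := max_eq_right (by linarith)
      refine ⟨-s - s' - 2 * liftLevel p, q, fun j hj => ?_, .inr ⟨?_, fun j => ?_⟩⟩
      · simp only [hAdef, hBdef, max_eq_left (sub_nonneg.2 (hq j hj).1),
          max_eq_left (sub_nonneg.2 (hq j hj).2)]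
        rw [hs, hs']
        ring
      · linarith [hs q, hs' q]
      · rw [hAq, hBq, add_zero]
        exact add_nonneg (le_max_right _ _) (le_max_right _ _)
  have hdiff : ∀ j, A j - B j = 2 * antiPart p j - s + s' := by
    intro j
    rcases hlevel with hL | ⟨hL, q, hqA, hqB, hq⟩
    · simp only [hAdef, hBdef, hL, sub_zero, max_eq_left (hA j), max_eq_left (hB j)]
      rw [hs, hs']
      ring
    · by_cases hj : j = q
      · subst hj
        have hAq : A j = 0 := max_eq_right (by linarith)
        have hBq : B j = 0 := max_eq_right (by linarith)
        linarith [hs j, hs' j]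
      · simp only [hAdef, hBdef, max_eq_left (sub_nonneg.2 (hq j hj).1),
          max_eq_left (sub_nonneg.2 (hq j hj).2)]
        rw [hs, hs']
        ring
  clear_value A B
  obtain ⟨h03, h12, ha, hb⟩ := symPart_spec p
  obtain ⟨hmax, hq1, hq2, hor⟩ := truncation_comparison hsum
  refine ⟨funext fun j => ?_, ?_, ?_, ?_⟩
  · have d0 := hdiff 0
    have d1 := hdiff 1
    have d2 := hdiff 2
    have d3 := hdiff 3
    simp only [antiPart, Matrix.cons_val] at d0 d1 d2 d3
    fin_cases j <;>
      simp only [planeCoords, Fin.zero_eta, Fin.mk_one, Fin.reduceFinMk, Matrix.cons_val,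
        Pi.smul_apply, smul_eq_mul] <;> linarith
  · rw [← ha]
    exact hq1
  · rw [← hb]
    exact hq2
  · rw [← ha, ← hb]
    exact hor

theorem truncLift_sum_pos (p : axesCompl) : 0 < ∑ v, truncLift p.1 v := by
  refine lt_of_le_of_ne (Finset.sum_nonneg fun v _ => truncLift_nonneg _ v) fun h => ?_
  have hv := (Finset.sum_eq_zero_iff_of_nonneg fun v _ => truncLift_nonneg p.1 v).1 h.symm
  obtain ⟨hY, -, -, hab⟩ := planeCoords_truncLift p.1
  simp only [hv _ (Finset.mem_univ _)] at hY hab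
  have hzero : planeCoords (fun _ => 0) (fun _ => 0) = 0 := by
    ext i
    · simp [planeCoords]
    · simp [planeCoords]
    · fin_cases i <;> simp [planeCoords]
  rw [hzero] at hY hab
  refine p.2 (by simpa using hY.symm) ?_
  rcases hab with h | h <;> simp at h <;> simp [h]

theorem normalized_mem (p : axesCompl) :
    (∑ v, truncLift p.1 v)⁻¹ • truncLift p.1 ∈ geomReal (thetaComplex (cubeEdges 3 1)) := by
  have hpos := truncLift_sum_pos p
  rw [mem_geomReal_iff]
  refine ⟨fun v => mul_nonneg (inv_nonneg.2 hpos.le) (truncLift_nonneg _ _), ?_, ?_⟩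
  · simp only [Pi.smul_apply, smul_eq_mul]
    rw [← Finset.mul_sum, inv_mul_cancel₀ hpos.ne']
  · obtain ⟨i, j, hij, h⟩ := exists_eq_level (liftA p.1) (liftB p.1)
    refine ⟨i, j, hij, ?_, ?_⟩
    · simp [truncLift, vertexFun_even, liftLevel, h]
    · simp [truncLift, vertexFun_odd, liftLevel, h]

/-- The map from the complement of the axes to the theta complex. -/
noncomputable def toTheta : C(axesCompl, geomReal (thetaComplex (cubeEdges 3 1))) where
  toFun p := ⟨_, normalized_mem p⟩
  continuous_toFun := by
    have h := continuous_truncLift.comp (continuous_subtype_val (p := (· ∈ axesCompl)))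
    refine Continuous.subtype_mk (Continuous.smul (Continuous.inv₀ ?_ fun p =>
      (truncLift_sum_pos p).ne') h) _
    exact continuous_finsetSum _ fun v _ => (continuous_apply v).comp h

theorem planeCoords_mem {f : (Fin 3 → Bool) → ℝ}
    (hf : f ∈ geomReal (thetaComplex (cubeEdges 3 1))) :
    planeCoords (fun i => f (evenVertex i)) (fun i => f (oddVertex i)) ∈ axesCompl := by
  obtain ⟨h0, hsum, i, j, hij, hi, hj⟩ := (mem_geomReal_iff f).1 hf
  rw [sum_vertex, Fin.sum_univ_four, Fin.sum_univ_four] at hsum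
  have hA : ∀ i, 0 ≤ f (evenVertex i) := fun i => h0 _
  have hB : ∀ i, 0 ≤ f (oddVertex i) := fun i => h0 _
  intro hY hab
  have y0 := congrFun hY 0
  have y1 := congrFun hY 1
  have y2 := congrFun hY 2
  have y3 := congrFun hY 3
  simp only [planeCoords, Matrix.cons_val, Pi.zero_apply] at y0 y1 y2 y3
  have hw : ∀ k, f (evenVertex k) = f (oddVertex k) + (f (evenVertex 3) - f (oddVertex 3)) := by
    intro k
    fin_cases k <;> simp only [Fin.zero_eta, Fin.mk_one, Fin.reduceFinMk] <;> linarith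
  have hw0 : f (evenVertex 3) - f (oddVertex 3) = 0 := by
    linarith [hw i, hw j, hA j, hB i]
  have hAB : ∀ k, f (evenVertex k) = f (oddVertex k) := fun k => by rw [hw k, hw0, add_zero]
  have hab' := mul_eq_zero.1 hab
  simp only [planeCoords, hAB] at hab'
  simp only [hAB] at hi y0 hsum
  have b0 := hB 0
  have b1 := hB 1
  have b2 := hB 2
  have b3 := hB 3
  fin_cases i <;> fin_cases j <;> simp at hij hi hj <;> grind

/-- The map from the theta complex to the complement of the axes. -/
noncomputable def ofTheta : C(geomReal (thetaComplex (cubeEdges 3 1)), axesCompl) where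
  toFun f := ⟨_, planeCoords_mem f.2⟩
  continuous_toFun := by
    have h : Continuous fun f : geomReal (thetaComplex (cubeEdges 3 1)) =>
        ((fun i => f.1 (evenVertex i) : Fin 4 → ℝ), (fun i => f.1 (oddVertex i) : Fin 4 → ℝ)) :=
      .prodMk (continuous_pi fun i => (continuous_apply _).comp continuous_subtype_val)
        (continuous_pi fun i => (continuous_apply _).comp continuous_subtype_val)
    exact (continuous_planeCoords.comp h).subtype_mk _

theorem toTheta_ofTheta (f : geomReal (thetaComplex (cubeEdges 3 1))) :
    toTheta (ofTheta f) = f := by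
  obtain ⟨h0, hsum, i, j, hij, hi, hj⟩ := (mem_geomReal_iff f.1).1 f.2
  have hA : ∀ l, liftA (ofTheta f).1 l = 2 * f.1 (evenVertex l) := by
    refine subMin_affine zero_le_two (fun l => h0 _) ⟨i, hi⟩ (s := -max
      (f.1 (evenVertex 1) + f.1 (oddVertex 1)) (f.1 (evenVertex 2) + f.1 (oddVertex 2)) -
      (f.1 (evenVertex 3) - f.1 (oddVertex 3))) fun l => ?_
    fin_cases l <;> simp [ofTheta, planeCoords, symPart, antiPart] <;> grind
  have hB : ∀ l, liftB (ofTheta f).1 l = 2 * f.1 (oddVertex l) := by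
    refine subMin_affine zero_le_two (fun l => h0 _) ⟨j, hj⟩ (s := -max
      (f.1 (evenVertex 1) + f.1 (oddVertex 1)) (f.1 (evenVertex 2) + f.1 (oddVertex 2)) +
      (f.1 (evenVertex 3) - f.1 (oddVertex 3))) fun l => ?_
    fin_cases l <;> simp [ofTheta, planeCoords, symPart, antiPart] <;> grind
  have hl : liftLevel (ofTheta f).1 = 0 := by
    refine le_antisymm ?_ ?_
    · simpa [liftLevel, hA, hB, hi, hj] using
        level_le (liftA (ofTheta f).1) (liftB (ofTheta f).1) hij
    · obtain ⟨i, j, -, h⟩ := exists_eq_level (liftA (ofTheta f).1) (liftB (ofTheta f).1)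
      rw [liftLevel, h, hA]
      exact (mul_nonneg zero_le_two (h0 _)).trans (le_max_left _ _)
  have ht : truncLift (ofTheta f).1 = (2 : ℝ) • f.1 := by
    apply vertex_funext <;> intro l
    · simp [truncLift, vertexFun_even, hA, hl, h0]
    · simp [truncLift, vertexFun_odd, hB, hl, h0]
  ext1
  change (∑ v, truncLift (ofTheta f).1 v)⁻¹ • truncLift (ofTheta f).1 = f.1
  simp [ht, ← Finset.mul_sum, hsum]

theorem ofTheta_toTheta_homotopic :
    (ofTheta.comp toTheta).Homotopic (ContinuousMap.id axesCompl) := by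
  have h : ∀ p : axesCompl, ∃ t : ℝ, 0 ≤ t ∧ (ofTheta (toTheta p)).1 = t • planeCoords
      (fun i => truncLift p.1 (evenVertex i)) fun i => truncLift p.1 (oddVertex i) :=
    fun p => ⟨_, inv_nonneg.2 (truncLift_sum_pos p).le,
      planeCoords_smul (inv_nonneg.2 (truncLift_sum_pos p).le)
        (fun i => truncLift p.1 (evenVertex i)) fun i => truncLift p.1 (oddVertex i)⟩
  refine (homotopic_of_sameQuadrant _ _ (fun p => ?_) fun p _ => ?_).symm
  · obtain ⟨t, ht, h⟩ := h p
    obtain ⟨hY, -⟩ := planeCoords_truncLift p.1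
    refine ⟨t * 2, by positivity, ?_⟩
    simp only [ContinuousMap.comp_apply, ContinuousMap.id_apply, h, Prod.smul_snd, hY, smul_smul]
  · obtain ⟨t, ht, h⟩ := h p
    obtain ⟨-, ha, hb, -⟩ := planeCoords_truncLift p.1
    simp only [ContinuousMap.comp_apply, ContinuousMap.id_apply, h, Prod.smul_fst, Prod.smul_snd,
      smul_eq_mul, mul_left_comm _ t]
    exact ⟨mul_nonneg ht ha, mul_nonneg ht hb⟩

/-- `Θ(Cube(3,1))` is homotopy equivalent to a wedge of three
copies of the 4-sphere (the unit sphere in `ℝ⁵`). -/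
theorem theta_cube_3_1 :
    Nonempty (ContinuousMap.HomotopyEquiv
      (↥(geomReal (thetaComplex (cubeEdges 3 1))))
      (Wedge (Fin 3) (↥(sphereSpace 5)) (spherePt 5 (by norm_num)))) := by
  have hid : toTheta.comp ofTheta = ContinuousMap.id _ := ContinuousMap.ext toTheta_ofTheta
  let e : ContinuousMap.HomotopyEquiv (geomReal (thetaComplex (cubeEdges 3 1))) axesCompl :=
    { toFun := ofTheta
      invFun := toTheta
      left_inv := hid ▸ ContinuousMap.Homotopic.refl _
      right_inv := ofTheta_toTheta_homotopic }
  exact ⟨e.trans axesComplEquivWedge⟩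
end
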